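/- Let a ≥ 0 and r ≥ 2, and let r' = r/(r−1) be the conjugate exponent. There exists a constant C(a,r) > 0 such that for every t ≠ 0 and every φ ∈ 𝒮⁺ one has ‖S_a(t)φ‖_{L^r_a} ≤ C(a,r) |t|^{−(a+1)(1/2 − 1/r)} ‖φ‖_{L^{r'}_a}. -/

import Mathlib

open MeasureTheory Filter Set

noncomputable def besselJ (ν : ℂ) (z : ℝ) : ℂ :=
  ∑' k : ℕ, ((-1 : ℂ) ^ k / (Complex.Gamma (k + 1) * Complex.Gamma (ν + k + 1))) *
    ((z : ℂ) / 2) ^ (2 * (k : ℂ) + ν)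

noncomputable def DIter : ℕ → (ℝ → ℂ) → (ℝ → ℂ)
  | 0, φ => φ
  | k + 1, φ => fun x => (1 / (x : ℂ)) * deriv (DIter k φ) x

def SPlus (φ : ℝ → ℂ) : Prop :=
  ContDiffOn ℝ (⊤ : ℕ∞) φ (Ioi 0) ∧
  ∀ m k : ℕ, ∃ C : ℝ, ∀ x > (0:ℝ), ‖(x : ℂ) ^ m * DIter k φ x‖ ≤ C

noncomputable def Skernel (a x y t : ℝ) : ℂ :=
  if 0 < t then
    Complex.exp (-(Complex.I) * (((a + 1) * Real.pi / 4 : ℝ) : ℂ)) *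
      (((2 * |t|) ^ (-(a + 1) / 2) : ℝ) : ℂ) *
      (((x * y / (2 * |t|)) ^ ((1 - a) / 2) : ℝ) : ℂ) *
      besselJ (((a - 1) / 2 : ℝ) : ℂ) (x * y / (2 * |t|)) *
      Complex.exp (Complex.I * ((((x ^ 2 + y ^ 2) / (4 * |t|)) : ℝ) : ℂ))
  else
    Complex.exp ((Complex.I) * (((a + 1) * Real.pi / 4 : ℝ) : ℂ)) *
      (((2 * |t|) ^ (-(a + 1) / 2) : ℝ) : ℂ) *
      (((x * y / (2 * |t|)) ^ ((1 - a) / 2) : ℝ) : ℂ) *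
      besselJ (((a - 1) / 2 : ℝ) : ℂ) (x * y / (2 * |t|)) *
      Complex.exp (-(Complex.I) * ((((x ^ 2 + y ^ 2) / (4 * |t|)) : ℝ) : ℂ))

noncomputable def Sop (a t : ℝ) (φ : ℝ → ℂ) (x : ℝ) : ℂ :=
  ∫ y in Ioi (0:ℝ), Skernel a x y t * φ y * ((y ^ a : ℝ) : ℂ)

noncomputable def LrA (a r : ℝ) (f : ℝ → ℂ) : ℝ :=
  (∫ x in Ioi (0:ℝ), ‖f x‖ ^ r * x ^ a) ^ (1 / r)

open scoped FourierTransform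

/-- The integral Fourier transform of an integrable and square-integrable function represents its
`L²` Fourier transform. -/
theorem fourier_toLp_ae_eq {f : ℝ → ℂ} (h1 : Integrable f) (h2 : MemLp f 2) :
    𝓕 f =ᵐ[volume] (𝓕 (h2.toLp f) : Lp ℂ 2 (volume : Measure ℝ)) := by
  have hcont : Continuous (𝓕 f) :=
    VectorFourier.fourierIntegral_continuous Real.continuous_fourierChar
      (by exact continuous_inner) h1
  refine ae_eq_of_integral_contDiff_smul_eq hcont.locallyIntegrable
    ((Lp.memLp _).locallyIntegrable (by norm_num)) fun g hg hgc => ?_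
  have hgC : ContDiff ℝ (⊤ : ℕ∞) fun x => (g x : ℂ) := Complex.ofRealCLM.contDiff.comp hg
  have hgcC : HasCompactSupport fun x => (g x : ℂ) := hgc.comp_left (g := ((↑) : ℝ → ℂ)) rfl
  set G : SchwartzMap ℝ ℂ := hgcC.toSchwartzMap hgC with hG
  have hGapp : ∀ x, G x = (g x : ℂ) := fun x => rfl
  have key := congrArg (fun F => F G) (Lp.fourier_toTemperedDistribution_eq (h2.toLp f))
  simp only [TemperedDistribution.fourier_apply, Lp.toTemperedDistribution_apply] at key
  have e1 : ∫ x, g x • 𝓕 f x = ∫ x, 𝓕 f x • G x := by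
    congr 1; ext x; simp [hGapp, mul_comm]
  have e2 : ∫ x, 𝓕 f x • G x = ∫ x, f x • 𝓕 (G : ℝ → ℂ) x := by
    simpa using! (VectorFourier.integral_fourierIntegral_smul_eq_flip (L := innerₗ ℝ)
      Real.continuous_fourierChar continuous_inner h1 G.integrable)
  have e3 : ∫ x, f x • 𝓕 (G : ℝ → ℂ) x = ∫ x, (𝓕 G) x • (h2.toLp f) x := by
    refine integral_congr_ae ?_
    filter_upwards [h2.coeFn_toLp] with x hx
    rw [hx, SchwartzMap.fourier_coe]
    simp [mul_comm]
  rw [e1, e2, e3, key]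
  congr 1

/-- Plancherel's identity for the integral Fourier transform, as an inequality. -/
theorem lintegral_enorm_fourier_sq_le {f : ℝ → ℂ} (h1 : Integrable f) (h2 : MemLp f 2) :
    ∫⁻ x, ‖𝓕 f x‖ₑ ^ 2 ≤ ∫⁻ x, ‖f x‖ₑ ^ 2 := by
  have hn : eLpNorm (𝓕 f) 2 = eLpNorm f 2 := by
    rw [eLpNorm_congr_ae (fourier_toLp_ae_eq h1 h2), ← Lp.enorm_def,
      ← eLpNorm_congr_ae h2.coeFn_toLp,
      ← Lp.enorm_def, ← ofReal_norm, ← ofReal_norm, Lp.norm_fourier_eq]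
  simp only [eLpNorm_eq_lintegral_rpow_enorm_toReal (p := 2) (by norm_num) (by norm_num)] at hn
  have := ENNReal.rpow_left_injective (by norm_num) hn
  norm_num at this
  exact this.le

open scoped Nat in
/-- Termwise differentiation of an entire power series. -/
theorem hasDerivAt_tsum_mul_pow {c : ℕ → ℝ} {C : ℝ} (hc : ∀ k, |c k| ≤ C / k !) (s : ℝ) :
    HasDerivAt (fun s => ∑' k, c k * s ^ k) (∑' k : ℕ, ((k + 1) * c (k + 1)) * s ^ k) s := by
  have hC : 0 ≤ C := by simpa using (abs_nonneg _).trans (hc 0)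
  set ρ : ℝ := |s| + 1
  have hρ : 0 < ρ := by positivity
  have hu : Summable fun n : ℕ => C / n ! * (n * ρ ^ (n - 1)) := by
    rw [← summable_nat_add_iff 1]
    refine ((Real.summable_pow_div_factorial ρ).mul_left C).congr fun n => ?_
    have : ((n : ℝ) + 1) ≠ 0 := by positivity
    have h2 : (n ! : ℝ) ≠ 0 := by positivity
    simp only [Nat.factorial_succ, Nat.add_sub_cancel]
    push_cast
    field_simp
  have hb : ∀ (n : ℕ), ∀ y ∈ Metric.ball (0:ℝ) ρ,
      ‖c n * ((n : ℝ) * y ^ (n - 1))‖ ≤ C / n ! * (n * ρ ^ (n - 1)) := by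
    intro n y hy
    have hy' : |y| ≤ ρ := by simpa using (Metric.mem_ball.1 hy).le
    rw [Real.norm_eq_abs, abs_mul, abs_mul, abs_pow, Nat.abs_cast]
    gcongr
    exact hc n
  have hs : s ∈ Metric.ball (0:ℝ) ρ := by simp [ρ]
  have h := hasDerivAt_tsum_of_isPreconnected hu Metric.isOpen_ball
    (convex_ball (0:ℝ) ρ).isPreconnected (g := fun k s => c k * s ^ k)
    (fun n y _ => (hasDerivAt_pow n y).const_mul (c n)) hb
    (Metric.mem_ball_self hρ)
    (summable_of_ne_finset_zero (s := {0}) fun n hn => by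
      have : n ≠ 0 := by simpa using hn
      simp [this]) hs
  have hsum : Summable fun n : ℕ => c n * ((n : ℝ) * s ^ (n - 1)) :=
    Summable.of_norm_bounded hu fun n => hb n s hs
  rw [hsum.tsum_eq_zero_add] at h
  convert! h using 1
  simp only [CharP.cast_eq_zero, zero_mul, mul_zero, zero_add, Nat.add_sub_cancel]
  refine tsum_congr fun k => ?_
  push_cast
  ring

open scoped Nat in
theorem summable_mul_pow_of_abs_le {c : ℕ → ℝ} {C : ℝ} (hc : ∀ k, |c k| ≤ C / k !) (s : ℝ) :
    Summable fun k => c k * s ^ k := by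
  refine Summable.of_norm_bounded ((Real.summable_pow_div_factorial |s|).mul_left C) fun n => ?_
  rw [norm_mul, norm_pow, Real.norm_eq_abs, Real.norm_eq_abs]
  calc |c n| * |s| ^ n ≤ C / n ! * |s| ^ n := by gcongr; exact hc n
    _ = _ := by ring

/-- Power series coefficients, in `z²`, of `z^{-ν} J_ν(z)` with `ν = (a - 1) / 2`. -/
noncomputable def hankelCoeff (a : ℝ) (k : ℕ) : ℝ :=
  (-1) ^ k / (Real.Gamma (k + 1) * Real.Gamma ((a - 1) / 2 + k + 1)) *
    2 ^ (-(2 * (k : ℝ) + (a - 1) / 2))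

/-- The normalized Bessel function `z^{-ν} J_ν(z)` with `ν = (a - 1) / 2`. -/
noncomputable def hankelJ (a z : ℝ) : ℝ := ∑' k, hankelCoeff a k * (z ^ 2) ^ k

theorem hankelCoeff_succ {a : ℝ} (ha : 0 ≤ a) (k : ℕ) :
    (k + 1) * hankelCoeff a (k + 1) * (4 * k + 2 + 2 * a) = -hankelCoeff a k := by
  have h1 : (0:ℝ) < k + 1 := by positivity
  have h2 : (0:ℝ) < (a - 1) / 2 + k + 1 := by
    have : (0:ℝ) ≤ k := by positivity
    linarith
  have g1 : Real.Gamma ((k:ℝ) + 1 + 1) = (k + 1) * Real.Gamma (k + 1) :=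
    Real.Gamma_add_one h1.ne'
  have g2 : Real.Gamma ((a - 1) / 2 + ((k:ℝ) + 1) + 1)
      = ((a - 1) / 2 + k + 1) * Real.Gamma ((a - 1) / 2 + k + 1) := by
    rw [← Real.Gamma_add_one h2.ne']; congr 1; ring
  have g3 : (2:ℝ) ^ (-(2 * ((k:ℝ) + 1) + (a - 1) / 2))
      = 2 ^ (-(2 * (k : ℝ) + (a - 1) / 2)) / 4 := by
    rw [show -(2 * ((k:ℝ) + 1) + (a - 1) / 2) = -(2 * (k : ℝ) + (a - 1) / 2) - (2:ℕ) by
      push_cast; ring, Real.rpow_sub_natCast two_ne_zero]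
    norm_num
  have p1 := (Real.Gamma_pos_of_pos h1).ne'
  have p2 := (Real.Gamma_pos_of_pos h2).ne'
  have h2' : (a - 1 + 2 * k + 2 : ℝ) ≠ 0 := by
    have := h2.ne'; intro h; apply this; linarith
  unfold hankelCoeff
  push_cast
  rw [g1, g2, g3]
  generalize Real.Gamma ((k:ℝ) + 1) = G1 at *
  generalize Real.Gamma ((a - 1) / 2 + (k:ℝ) + 1) = G2 at *
  generalize (2:ℝ) ^ (-(2 * (k : ℝ) + (a - 1) / 2)) = P at *
  have h2'' := h2.ne'
  have h1' := h1.ne'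
  have e : (4 * (k:ℝ) + 2 + 2 * a) = 4 * ((a - 1) / 2 + k + 1) := by ring
  rw [e]
  generalize (a - 1) / 2 + (k:ℝ) + 1 = Q at *
  field_simp
  ring

open scoped Nat in
theorem exists_abs_hankelCoeff_le {a : ℝ} (ha : 0 ≤ a) :
    ∃ C, ∀ k, |hankelCoeff a k| ≤ C / k ! := by
  refine ⟨|hankelCoeff a 0|, fun k => ?_⟩
  induction k with
  | zero => simp
  | succ k ih =>
    have h := congrArg abs (hankelCoeff_succ ha k)
    rw [abs_mul, abs_mul, abs_neg, abs_of_nonneg (show (0:ℝ) ≤ k + 1 by positivity),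
      abs_of_nonneg (show (0:ℝ) ≤ 4 * k + 2 + 2 * a by positivity)] at h
    have h1 : (k + 1) * |hankelCoeff a (k + 1)| ≤ |hankelCoeff a k| := by
      rw [← h]
      refine le_mul_of_one_le_right (by positivity) ?_
      have : (0:ℝ) ≤ k := by positivity
      linarith
    have h2 : (0:ℝ) < k ! := by positivity
    rw [Nat.factorial_succ]
    push_cast
    rw [le_div_iff₀ (by positivity)]
    rw [le_div_iff₀ h2] at ih
    calc _ = ((k + 1) * |hankelCoeff a (k + 1)|) * k ! := by ring
      _ ≤ |hankelCoeff a k| * k ! := by gcongr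
      _ ≤ _ := ih

/-- The normalized Bessel function is a solution of `j'' + (a / z) j' + j = 0`. -/
theorem exists_hankelJ_ode {a : ℝ} (ha : 0 ≤ a) :
    ∃ j' j'' : ℝ → ℝ, (∀ z, HasDerivAt (hankelJ a) (j' z) z) ∧
      (∀ z, HasDerivAt j' (j'' z) z) ∧ ∀ z, z ≠ 0 → j'' z + a / z * j' z + hankelJ a z = 0 := by
  obtain ⟨C, hC⟩ := exists_abs_hankelCoeff_le ha
  have shift : ∀ {c : ℕ → ℝ}, (∀ k, |c k| ≤ C / k.factorial) →
      ∀ k : ℕ, |(k + 1) * c (k + 1)| ≤ C / k.factorial := by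
    intro c hc k
    have h := hc (k + 1)
    have h2 : (0:ℝ) < k.factorial := by positivity
    rw [Nat.factorial_succ] at h
    push_cast at h
    rw [abs_mul, abs_of_nonneg (show (0:ℝ) ≤ k + 1 by positivity)]
    rw [le_div_iff₀ (by positivity)] at h ⊢
    linarith
  set c1 : ℕ → ℝ := fun k => (k + 1) * hankelCoeff a (k + 1) with hc1
  set c2 : ℕ → ℝ := fun k => (k + 1) * c1 (k + 1) with hc2
  have hC1 : ∀ k, |c1 k| ≤ C / k.factorial := shift hC
  have hC2 : ∀ k, |c2 k| ≤ C / k.factorial := shift hC1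
  set w1 : ℝ → ℝ := fun s => ∑' k, c1 k * s ^ k with hw1
  set w2 : ℝ → ℝ := fun s => ∑' k, c2 k * s ^ k with hw2
  have hsq : ∀ z : ℝ, HasDerivAt (fun z : ℝ => z ^ 2) (2 * z) z := fun z => by
    simpa using hasDerivAt_pow 2 z
  have d1 : ∀ z, HasDerivAt (hankelJ a) (w1 (z ^ 2) * (2 * z)) z := fun z => by
    have := (hasDerivAt_tsum_mul_pow hC (z ^ 2)).scomp z (hsq z)
    rw [smul_eq_mul, mul_comm] at this
    exact this
  have d2 : ∀ z, HasDerivAt (fun z => w1 (z ^ 2)) (w2 (z ^ 2) * (2 * z)) z := fun z => by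
    have := (hasDerivAt_tsum_mul_pow hC1 (z ^ 2)).scomp z (hsq z)
    rw [smul_eq_mul, mul_comm] at this
    exact this
  refine ⟨fun z => w1 (z ^ 2) * (2 * z), fun z => w2 (z ^ 2) * (2 * z) * (2 * z) + w1 (z ^ 2) * 2,
    d1, fun z => ?_, fun z hz => ?_⟩
  · have h2 : HasDerivAt (fun z : ℝ => 2 * z) 2 z := by
      simpa using (hasDerivAt_id z).const_mul (2:ℝ)
    exact (d2 z).mul h2
  · have s0 := summable_mul_pow_of_abs_le hC (z ^ 2)
    have s1 := summable_mul_pow_of_abs_le hC1 (z ^ 2)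
    have s2 := summable_mul_pow_of_abs_le hC2 (z ^ 2)
    have hs2 : HasSum (fun k : ℕ => k * c1 k * (z ^ 2) ^ k) (z ^ 2 * w2 (z ^ 2)) := by
      rw [← hasSum_nat_add_iff' 1]
      simp only [Finset.range_one, Finset.sum_singleton, CharP.cast_eq_zero, zero_mul, sub_zero]
      convert! s2.hasSum.mul_left (z ^ 2) using 2 with k
      simp only [hc2]
      push_cast
      ring
    have htot := ((hs2.mul_left 4).add (s1.hasSum.mul_left (2 + 2 * a))).add s0.hasSum
    have hzero : ∀ k : ℕ, 4 * (k * c1 k * (z ^ 2) ^ k) + (2 + 2 * a) * (c1 k * (z ^ 2) ^ k)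
        + hankelCoeff a k * (z ^ 2) ^ k = 0 := fun k => by
      have := hankelCoeff_succ ha k
      simp only [hc1]
      linear_combination (z ^ 2) ^ k * this
    simp only [hzero] at htot
    have := htot.unique hasSum_zero
    have e : a / z * (w1 (z ^ 2) * (2 * z)) = 2 * a * w1 (z ^ 2) := by field_simp
    simp only [e]
    change _ + _ + hankelJ a z = 0 at this
    change 4 * (z ^ 2 * w2 (z ^ 2)) + (2 + 2 * a) * w1 (z ^ 2) + hankelJ a z = 0 at this
    linarith

/-- A function whose derivative is `O(z⁻²)` converges at rate `O(z⁻¹)`. -/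
theorem exists_limit_of_abs_deriv_le {f f' : ℝ → ℝ} {D : ℝ}
    (hf : ∀ z, 1 ≤ z → HasDerivAt f (f' z) z) (hb : ∀ z, 1 ≤ z → |f' z| ≤ D / z ^ 2) :
    ∃ L, ∀ z, 1 ≤ z → |f z - L| ≤ D / z := by
  have hinv : ∀ z : ℝ, 1 ≤ z → HasDerivAt (fun z => D / z) (-(D / z ^ 2)) z := by
    intro z hz
    have := (hasDerivAt_inv (show z ≠ 0 by positivity)).const_mul D
    simpa [div_eq_mul_inv] using! this
  have hD : 0 ≤ D := by
    have := (abs_nonneg _).trans (hb 1 le_rfl); simpa using this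
  have hu : MonotoneOn (fun z => f z - D / z) (Ici 1) := by
    refine monotoneOn_of_hasDerivWithinAt_nonneg (convex_Ici 1) (f' := fun z => f' z + D / z ^ 2)
      (fun z hz => ((hf z hz).sub (hinv z hz)).continuousAt.continuousWithinAt) ?_ ?_
    · intro z hz
      rw [interior_Ici] at hz ⊢
      simpa using! ((hf z hz.le).sub (hinv z hz.le)).hasDerivWithinAt
    · intro z hz
      rw [interior_Ici] at hz
      have := (abs_le.1 (hb z hz.le)).1
      linarith
  have hv : AntitoneOn (fun z => f z + D / z) (Ici 1) := by
    refine antitoneOn_of_hasDerivWithinAt_nonpos (convex_Ici 1) (f' := fun z => f' z - D / z ^ 2)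
      (fun z hz => ((hf z hz).add (hinv z hz)).continuousAt.continuousWithinAt) ?_ ?_
    · intro z hz
      rw [interior_Ici] at hz ⊢
      simpa [sub_eq_add_neg] using! ((hf z hz.le).add (hinv z hz.le)).hasDerivWithinAt
    · intro z hz
      rw [interior_Ici] at hz
      have := (abs_le.1 (hb z hz.le)).2
      linarith
  have huv : ∀ z ∈ Ici (1:ℝ), ∀ w ∈ Ici (1:ℝ), f z - D / z ≤ f w + D / w := by
    intro z hz w hw
    have hm : max z w ∈ Ici (1:ℝ) := mem_Ici.2 (le_max_of_le_left hz)
    have h1 := hu hz hm (le_max_left _ _)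
    have h2 := hv hw hm (le_max_right _ _)
    have : 0 ≤ D / max z w := div_nonneg hD (zero_le_one.trans hm)
    simp only at h1 h2
    linarith
  refine ⟨sSup ((fun z => f z - D / z) '' Ici 1), fun z hz => ?_⟩
  have hle : sSup ((fun z => f z - D / z) '' Ici 1) ≤ f z + D / z := by
    refine csSup_le ⟨_, mem_image_of_mem _ (mem_Ici.2 le_rfl)⟩ ?_
    rintro _ ⟨w, hw, rfl⟩
    exact huv w hw z hz
  have hge : f z - D / z ≤ sSup ((fun z => f z - D / z) '' Ici 1) := by
    refine le_csSup ⟨f z + D / z, ?_⟩ (mem_image_of_mem _ hz)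
    rintro _ ⟨w, hw, rfl⟩
    exact huv w hw z hz
  rw [abs_le]; constructor <;> linarith

/-- Solutions of `K'' + K = c K / z²` are asymptotically trigonometric. -/
theorem exists_trig_asymptotics {K K' : ℝ → ℝ} {c : ℝ}
    (hK : ∀ z, 1 ≤ z → HasDerivAt K (K' z) z)
    (hK' : ∀ z, 1 ≤ z → HasDerivAt K' ((c / z ^ 2 - 1) * K z) z) :
    ∃ A B D : ℝ, ∀ z, 1 ≤ z → |K z - (A * Real.cos z + B * Real.sin z)| ≤ D / z := by
  have hinv : ∀ z : ℝ, 1 ≤ z → HasDerivAt (fun z => |c| / z) (-(|c| / z ^ 2)) z := by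
    intro z hz
    have := (hasDerivAt_inv (show z ≠ 0 by positivity)).const_mul |c|
    simpa [div_eq_mul_inv] using! this
  have hE : ∀ z, 1 ≤ z → HasDerivAt (fun z => (K z ^ 2 + K' z ^ 2) * Real.exp (|c| / z))
      ((2 * c / z ^ 2 * (K z * K' z) - |c| / z ^ 2 * (K z ^ 2 + K' z ^ 2))
        * Real.exp (|c| / z)) z := by
    intro z hz
    have := (((hK z hz).pow 2).add ((hK' z hz).pow 2)).mul (hinv z hz).exp
    convert! this using 1
    simp only [Pi.add_apply, Pi.pow_apply]
    push_cast
    ring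
  have hanti : AntitoneOn (fun z => (K z ^ 2 + K' z ^ 2) * Real.exp (|c| / z)) (Ici 1) := by
    refine antitoneOn_of_hasDerivWithinAt_nonpos (convex_Ici 1)
      (fun z hz => (hE z hz).continuousAt.continuousWithinAt)
      (fun z hz => (hE z (interior_subset hz)).hasDerivWithinAt) fun z hz => ?_
    refine mul_nonpos_of_nonpos_of_nonneg ?_ (Real.exp_pos _).le
    have h1 : c * (2 * (K z * K' z)) ≤ |c| * (K z ^ 2 + K' z ^ 2) := by
      refine (le_abs_self _).trans ?_
      rw [abs_mul]
      refine mul_le_mul_of_nonneg_left (abs_le.2 ⟨?_, ?_⟩) (abs_nonneg c)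
      · nlinarith [sq_nonneg (K z + K' z)]
      · nlinarith [sq_nonneg (K z - K' z)]
    have h2 : 2 * c / z ^ 2 * (K z * K' z) - |c| / z ^ 2 * (K z ^ 2 + K' z ^ 2)
        = (c * (2 * (K z * K' z)) - |c| * (K z ^ 2 + K' z ^ 2)) / z ^ 2 := by ring
    rw [h2]
    exact div_nonpos_of_nonpos_of_nonneg (by linarith) (sq_nonneg z)
  obtain ⟨M, hM⟩ : ∃ M, ∀ z, 1 ≤ z → |K z| ≤ M := by
    refine ⟨√((K 1 ^ 2 + K' 1 ^ 2) * Real.exp (|c| / 1)), fun z hz => Real.abs_le_sqrt ?_⟩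
    refine le_trans ?_ (hanti (mem_Ici.2 le_rfl) hz hz)
    have : 1 ≤ Real.exp (|c| / z) := Real.one_le_exp (by positivity)
    nlinarith [sq_nonneg (K z), sq_nonneg (K' z)]
  have hbound : ∀ s z : ℝ, |s| ≤ 1 → 1 ≤ z → |c / z ^ 2 * K z * s| ≤ |c| * M / z ^ 2 := by
    intro s z hs hz
    have h0 : 0 ≤ M := (abs_nonneg _).trans (hM z hz)
    rw [abs_mul, abs_mul, abs_div, abs_of_nonneg (sq_nonneg z), div_mul_eq_mul_div]
    calc |c| * |K z| / z ^ 2 * |s| ≤ |c| * |K z| / z ^ 2 * 1 := by gcongr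
      _ ≤ |c| * M / z ^ 2 := by rw [mul_one]; gcongr; exact hM z hz
  obtain ⟨A, hA⟩ := exists_limit_of_abs_deriv_le (D := |c| * M)
    (f := fun z => K z * Real.cos z - K' z * Real.sin z)
    (f' := fun z => c / z ^ 2 * K z * (-Real.sin z))
    (fun z hz => by
      have := ((hK z hz).mul (Real.hasDerivAt_cos z)).sub ((hK' z hz).mul (Real.hasDerivAt_sin z))
      convert! this using 1; ring)
    (fun z hz => hbound _ z (by rw [abs_neg]; exact Real.abs_sin_le_one z) hz)
  obtain ⟨B, hB⟩ := exists_limit_of_abs_deriv_le (D := |c| * M)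
    (f := fun z => K z * Real.sin z + K' z * Real.cos z)
    (f' := fun z => c / z ^ 2 * K z * Real.cos z)
    (fun z hz => by
      have := ((hK z hz).mul (Real.hasDerivAt_sin z)).add ((hK' z hz).mul (Real.hasDerivAt_cos z))
      convert! this using 1; ring)
    (fun z hz => hbound _ z (Real.abs_cos_le_one z) hz)
  refine ⟨A, B, 2 * (|c| * M), fun z hz => ?_⟩
  have hid : K z - (A * Real.cos z + B * Real.sin z)
      = (K z * Real.cos z - K' z * Real.sin z - A) * Real.cos z
        + (K z * Real.sin z + K' z * Real.cos z - B) * Real.sin z := by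
    linear_combination (-K z) * Real.sin_sq_add_cos_sq z
  rw [hid]
  calc _ ≤ |K z * Real.cos z - K' z * Real.sin z - A| * |Real.cos z|
        + |K z * Real.sin z + K' z * Real.cos z - B| * |Real.sin z| := by
        rw [← abs_mul, ← abs_mul]; exact abs_add_le _ _
    _ ≤ (|c| * M / z) * 1 + (|c| * M / z) * 1 := by
        gcongr
        · exact (abs_nonneg _).trans (hA z hz)
        · exact hA z hz
        · exact Real.abs_cos_le_one z
        · exact (abs_nonneg _).trans (hA z hz)
        · exact hB z hz
        · exact Real.abs_sin_le_one z
    _ = _ := by ring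

theorem continuous_hankelJ {a : ℝ} (ha : 0 ≤ a) : Continuous (hankelJ a) := by
  obtain ⟨_, _, h, -⟩ := exists_hankelJ_ode ha
  exact continuous_iff_continuousAt.2 fun z => (h z).continuousAt

/-- Trigonometric asymptotics of `z^{a/2} j(z)` and boundedness of `j`. -/
theorem exists_hankelJ_asymptotics {a : ℝ} (ha : 0 ≤ a) :
    ∃ A B D M : ℝ, (∀ z, 0 < z → |hankelJ a z| ≤ M) ∧
      ∀ z, 0 < z →
        |z ^ (a / 2) * hankelJ a z - (A * Real.cos z + B * Real.sin z)| ≤ D * min 1 z⁻¹ := by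
  obtain ⟨j', j'', h1, h2, h3⟩ := exists_hankelJ_ode ha
  have hpow : ∀ p z : ℝ, 1 ≤ z → HasDerivAt (fun z : ℝ => z ^ p) (p * z ^ (p - 1)) z :=
    fun p z hz => Real.hasDerivAt_rpow_const (Or.inl (by positivity))
  obtain ⟨A, B, D, hD⟩ := exists_trig_asymptotics (c := a / 2 * (a / 2 - 1))
    (K := fun z => z ^ (a / 2) * hankelJ a z)
    (K' := fun z => a / 2 * z ^ (a / 2 - 1) * hankelJ a z + z ^ (a / 2) * j' z)
    (fun z hz => (hpow _ z hz).mul (h1 z))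
    (fun z hz => by
      have hz0 : 0 < z := by positivity
      have := (((hpow (a / 2 - 1) z hz).const_mul (a / 2)).mul (h1 z)).add
        ((hpow (a / 2) z hz).mul (h2 z))
      convert! this using 1
      have e1 : z ^ (a / 2) = z ^ (a / 2 - 1 - 1) * z ^ 2 := by
        rw [← Real.rpow_natCast, ← Real.rpow_add hz0]; congr 1; push_cast; ring
      have e2 : z ^ (a / 2 - 1) = z ^ (a / 2 - 1 - 1) * z := by
        nth_rewrite 3 [← Real.rpow_one z]; rw [← Real.rpow_add hz0]; congr 1; ring
      have ode : j'' z = -(a / z * j' z) - hankelJ a z := by linarith [h3 z hz0.ne']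
      rw [e1, e2, ode]
      generalize z ^ (a / 2 - 1 - 1) = P
      field_simp
      ring)
  obtain ⟨M₀, hM₀⟩ := (isCompact_Icc (a := (0:ℝ)) (b := 1)).exists_bound_of_continuousOn
    (continuous_hankelJ ha).continuousOn
  have hM₀0 : 0 ≤ M₀ := (norm_nonneg _).trans (hM₀ 0 (by simp))
  have hD0 : 0 ≤ D := by simpa using (abs_nonneg _).trans (hD 1 le_rfl)
  have htrig : ∀ z, |A * Real.cos z + B * Real.sin z| ≤ |A| + |B| := fun z => by
    refine (abs_add_le _ _).trans ?_
    rw [abs_mul, abs_mul]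
    exact add_le_add (mul_le_of_le_one_right (abs_nonneg _) (Real.abs_cos_le_one z))
      (mul_le_of_le_one_right (abs_nonneg _) (Real.abs_sin_le_one z))
  refine ⟨A, B, M₀ + |A| + |B| + D, M₀ + |A| + |B| + D, fun z hz => ?_, fun z hz => ?_⟩
  · rcases le_total z 1 with h | h
    · have := hM₀ z ⟨hz.le, h⟩
      rw [Real.norm_eq_abs] at this
      linarith [abs_nonneg A, abs_nonneg B]
    · have hp : 1 ≤ z ^ (a / 2) := Real.one_le_rpow h (by positivity)
      have h4 : |hankelJ a z| ≤ |z ^ (a / 2) * hankelJ a z| := by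
        rw [abs_mul, abs_of_nonneg (zero_le_one.trans hp)]
        exact le_mul_of_one_le_left (abs_nonneg _) hp
      have h5 := hD z h
      have h6 : D / z ≤ D := div_le_self hD0 h
      have h7 := abs_sub_abs_le_abs_sub (z ^ (a / 2) * hankelJ a z)
        (A * Real.cos z + B * Real.sin z)
      linarith [htrig z]
  · rcases le_total z 1 with h | h
    · rw [min_eq_left (by rw [one_le_inv₀ hz]; exact h), mul_one]
      have h4 : |z ^ (a / 2) * hankelJ a z| ≤ M₀ := by
        rw [abs_mul, abs_of_nonneg (by positivity)]
        refine (mul_le_of_le_one_left (abs_nonneg _) ?_).trans (hM₀ z ⟨hz.le, h⟩)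
        exact Real.rpow_le_one hz.le h (by positivity)
      have h7 := abs_sub (z ^ (a / 2) * hankelJ a z)
        (A * Real.cos z + B * Real.sin z)
      linarith [htrig z]
    · rw [min_eq_right (inv_le_one_of_one_le₀ h)]
      refine (hD z h).trans ?_
      rw [div_eq_mul_inv]
      gcongr
      linarith [abs_nonneg A, abs_nonneg B]

theorem lintegral_min_mul_rpow_le {x : ℝ} (hx : 0 < x) :
    ∫⁻ y in Ioi (0:ℝ), ENNReal.ofReal (min 1 (x * y)⁻¹ * y ^ (-(1 / 2) : ℝ))
      ≤ ENNReal.ofReal (4 * x ^ (-(1 / 2) : ℝ)) := by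
  have hx' : 0 < x⁻¹ := inv_pos.2 hx
  have near : ∫⁻ y in Ioc 0 x⁻¹, ENNReal.ofReal (min 1 (x * y)⁻¹ * y ^ (-(1 / 2) : ℝ))
      ≤ ENNReal.ofReal (2 * x ^ (-(1 / 2) : ℝ)) := by
    have hintegrable : IntegrableOn (fun y : ℝ => y ^ (-(1 / 2) : ℝ)) (Ioc 0 x⁻¹) := by
      rw [← intervalIntegrable_iff_integrableOn_Ioc_of_le hx'.le]
      exact intervalIntegral.intervalIntegrable_rpow' (by norm_num)
    have hval : ∫ y in Ioc 0 x⁻¹, y ^ (-(1 / 2) : ℝ) = 2 * x ^ (-(1 / 2) : ℝ) := by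
      rw [← intervalIntegral.integral_of_le hx'.le, integral_rpow (Or.inl (by norm_num)),
        Real.inv_rpow hx.le, ← Real.rpow_neg hx.le]
      norm_num
      ring
    rw [← hval, ofReal_integral_eq_lintegral_ofReal hintegrable]
    · refine setLIntegral_mono' measurableSet_Ioc fun y hy => ENNReal.ofReal_le_ofReal ?_
      exact mul_le_of_le_one_left (Real.rpow_nonneg hy.1.le _) (min_le_left _ _)
    · filter_upwards [ae_restrict_mem measurableSet_Ioc] with y hy
      exact Real.rpow_nonneg hy.1.le _
  have far : ∫⁻ y in Ioi x⁻¹, ENNReal.ofReal (min 1 (x * y)⁻¹ * y ^ (-(1 / 2) : ℝ))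
      ≤ ENNReal.ofReal (2 * x ^ (-(1 / 2) : ℝ)) := by
    have hintegrable : IntegrableOn (fun y : ℝ => x⁻¹ * y ^ (-(3 / 2) : ℝ)) (Ioi x⁻¹) :=
      (integrableOn_Ioi_rpow_of_lt (by norm_num) hx').const_mul _
    have hval : ∫ y in Ioi x⁻¹, x⁻¹ * y ^ (-(3 / 2) : ℝ) = 2 * x ^ (-(1 / 2) : ℝ) := by
      rw [integral_const_mul, integral_Ioi_rpow_of_lt (by norm_num) hx',
        Real.inv_rpow hx.le, ← Real.rpow_neg hx.le]
      have : x ^ (-(-(3 / 2) + 1) : ℝ) = x * x ^ (-(1 / 2) : ℝ) := by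
        nth_rewrite 2 [← Real.rpow_one x]; rw [← Real.rpow_add hx]; norm_num
      rw [this]
      field_simp
      norm_num
    rw [← hval, ofReal_integral_eq_lintegral_ofReal hintegrable]
    · refine setLIntegral_mono' measurableSet_Ioi fun y hy => ENNReal.ofReal_le_ofReal ?_
      have hy0 : 0 < y := hx'.trans hy
      have : y ^ (-(3 / 2) : ℝ) = y⁻¹ * y ^ (-(1 / 2) : ℝ) := by
        rw [← Real.rpow_neg_one y, ← Real.rpow_add hy0]; norm_num
      rw [this, ← mul_assoc, ← mul_inv]
      exact mul_le_mul_of_nonneg_right (min_le_right _ _) (Real.rpow_nonneg hy0.le _)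
    · filter_upwards [ae_restrict_mem measurableSet_Ioi] with y hy
      have hy0 : 0 < y := hx'.trans hy
      positivity
  rw [← Ioc_union_Ioi_eq_Ioi hx'.le]
  refine (lintegral_union_le _ _ _).trans ((add_le_add near far).trans ?_)
  rw [← ENNReal.ofReal_add (by positivity) (by positivity)]
  exact ENNReal.ofReal_le_ofReal (by linarith)

/-- Schur test for the kernel `min 1 (xy)⁻¹` on `L²(0, ∞)`. -/
theorem lintegral_min_kernel_sq_le {g : ℝ → ENNReal} (hg : Measurable g) :
    ∫⁻ x in Ioi (0:ℝ), (∫⁻ y in Ioi (0:ℝ), ENNReal.ofReal (min 1 (x * y)⁻¹) * g y) ^ 2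
      ≤ 16 * ∫⁻ y in Ioi (0:ℝ), g y ^ 2 := by
  set ρ : ℝ → ℝ → ENNReal := fun x y => ENNReal.ofReal (min 1 (x * y)⁻¹) with hρ
  have hρm : Measurable (Function.uncurry ρ) := by
    simp only [hρ, Function.uncurry_def]; fun_prop
  have hcs : ∀ x ∈ Ioi (0:ℝ), (∫⁻ y in Ioi (0:ℝ), ρ x y * g y) ^ 2
      ≤ ∫⁻ y in Ioi (0:ℝ), ENNReal.ofReal (4 * x ^ (-(1 / 2) : ℝ)) *
          (ρ x y * ENNReal.ofReal (y ^ (1 / 2 : ℝ)) * g y ^ 2) := by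
    intro x hx
    have hρx : Measurable (ρ x) := by fun_prop
    have h1 : ∫⁻ y in Ioi (0:ℝ), ρ x y * g y
        ≤ (∫⁻ y in Ioi (0:ℝ), ENNReal.ofReal (min 1 (x * y)⁻¹ * y ^ (-(1 / 2) : ℝ))) ^ (1 / 2 : ℝ)
          * (∫⁻ y in Ioi (0:ℝ), ρ x y * ENNReal.ofReal (y ^ (1 / 2 : ℝ)) * g y ^ 2)
            ^ (1 / 2 : ℝ) := by
      refine le_trans (setLIntegral_mono' measurableSet_Ioi fun y hy => ?_)
        (ENNReal.lintegral_mul_norm_pow_le (by fun_prop) (by fun_prop)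
          (by norm_num) (by norm_num) (by norm_num))
      have hy0 : (0:ℝ) < y := hy
      have hx0 : (0:ℝ) < x := hx
      rw [← ENNReal.mul_rpow_of_nonneg _ _ (by norm_num : (0:ℝ) ≤ 1 / 2)]
      have e : ENNReal.ofReal (min 1 (x * y)⁻¹ * y ^ (-(1 / 2) : ℝ)) *
          (ρ x y * ENNReal.ofReal (y ^ (1 / 2 : ℝ)) * g y ^ 2) = (ρ x y * g y) ^ (2:ℝ) := by
        rw [ENNReal.ofReal_mul (by positivity)]
        have : ENNReal.ofReal (y ^ (-(1 / 2) : ℝ)) * ENNReal.ofReal (y ^ (1 / 2 : ℝ)) = 1 := by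
          rw [← ENNReal.ofReal_mul (by positivity), ← Real.rpow_add hy0]; norm_num
        calc _ = (ENNReal.ofReal (y ^ (-(1 / 2) : ℝ)) * ENNReal.ofReal (y ^ (1 / 2 : ℝ))) *
              (ρ x y * g y) ^ 2 := by simp only [hρ]; ring
          _ = _ := by rw [this, one_mul, ← ENNReal.rpow_natCast]; norm_num
      rw [e, ← ENNReal.rpow_mul]
      norm_num
    calc _ ≤ _ := pow_le_pow_left₀ (zero_le) h1 2
      _ = (∫⁻ y in Ioi (0:ℝ), ENNReal.ofReal (min 1 (x * y)⁻¹ * y ^ (-(1 / 2) : ℝ))) *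
          ∫⁻ y in Ioi (0:ℝ), ρ x y * ENNReal.ofReal (y ^ (1 / 2 : ℝ)) * g y ^ 2 := by
        rw [mul_pow, ← ENNReal.rpow_natCast, ← ENNReal.rpow_natCast, ← ENNReal.rpow_mul,
          ← ENNReal.rpow_mul]
        norm_num
      _ ≤ ENNReal.ofReal (4 * x ^ (-(1 / 2) : ℝ)) *
          ∫⁻ y in Ioi (0:ℝ), ρ x y * ENNReal.ofReal (y ^ (1 / 2 : ℝ)) * g y ^ 2 := by
        gcongr
        exact lintegral_min_mul_rpow_le hx
      _ = _ := (lintegral_const_mul _ (by fun_prop)).symm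
  refine (setLIntegral_mono' measurableSet_Ioi hcs).trans ?_
  rw [lintegral_lintegral_swap (by fun_prop), ← lintegral_const_mul _ (by fun_prop)]
  refine setLIntegral_mono' measurableSet_Ioi fun y hy => ?_
  have hy0 : (0:ℝ) < y := hy
  calc ∫⁻ x in Ioi (0:ℝ), ENNReal.ofReal (4 * x ^ (-(1 / 2) : ℝ)) *
          (ρ x y * ENNReal.ofReal (y ^ (1 / 2 : ℝ)) * g y ^ 2)
      = ∫⁻ x in Ioi (0:ℝ), (4 * ENNReal.ofReal (y ^ (1 / 2 : ℝ)) * g y ^ 2) *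
          ENNReal.ofReal (min 1 (y * x)⁻¹ * x ^ (-(1 / 2) : ℝ)) := by
        refine setLIntegral_congr_fun measurableSet_Ioi fun x hx => ?_
        have hx0 : (0:ℝ) < x := hx
        simp only [hρ]
        rw [ENNReal.ofReal_mul (by norm_num), ENNReal.ofReal_mul (by positivity), mul_comm y x]
        norm_num
        ring
    _ ≤ (4 * ENNReal.ofReal (y ^ (1 / 2 : ℝ)) * g y ^ 2) *
          ENNReal.ofReal (4 * y ^ (-(1 / 2) : ℝ)) := by
        rw [lintegral_const_mul _ (by fun_prop)]
        gcongr
        exact lintegral_min_mul_rpow_le hy0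
    _ = 16 * g y ^ 2 := by
        have : ENNReal.ofReal (y ^ (1 / 2 : ℝ)) * ENNReal.ofReal (4 * y ^ (-(1 / 2) : ℝ)) = 4 := by
          rw [← ENNReal.ofReal_mul (by positivity), mul_left_comm, ← Real.rpow_add hy0]; norm_num
        calc _ = 4 * (ENNReal.ofReal (y ^ (1 / 2 : ℝ)) *
              ENNReal.ofReal (4 * y ^ (-(1 / 2) : ℝ))) * g y ^ 2 := by ring
          _ = _ := by rw [this]; norm_num

theorem lintegral_truncated_rpow_le {r L w : ℝ} (hr : 2 < r) (hL : 0 < L) (hw : 0 ≤ w) :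
    ENNReal.ofReal w ^ 2 * ∫⁻ l in Ioi (0:ℝ),
        {l : ℝ | w ≤ (L / l) ^ (r - 1)}.indicator (fun l => ENNReal.ofReal (l ^ (r - 3))) l
      ≤ ENNReal.ofReal (L ^ (r - 2) / (r - 2)) * ENNReal.ofReal (w ^ (r / (r - 1))) := by
  rcases hw.eq_or_lt with rfl | hw
  · simp
  set Λ := L * w ^ (-(1 / (r - 1))) with hΛ
  have hΛ0 : 0 < Λ := by positivity
  have hintegrable : IntegrableOn (fun l : ℝ => l ^ (r - 3)) (Ioc 0 Λ) := by
    rw [← intervalIntegrable_iff_integrableOn_Ioc_of_le hΛ0.le]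
    exact intervalIntegral.intervalIntegrable_rpow' (by linarith)
  have hval : ∫ l in Ioc 0 Λ, l ^ (r - 3) = Λ ^ (r - 2) / (r - 2) := by
    rw [← intervalIntegral.integral_of_le hΛ0.le, integral_rpow (Or.inl (by linarith)),
      show r - 3 + 1 = r - 2 by ring, Real.zero_rpow (by linarith), sub_zero]
  have hle : ∫⁻ l in Ioi (0:ℝ),
        {l : ℝ | w ≤ (L / l) ^ (r - 1)}.indicator (fun l => ENNReal.ofReal (l ^ (r - 3))) l
      ≤ ENNReal.ofReal (Λ ^ (r - 2) / (r - 2)) := by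
    rw [← hval, ofReal_integral_eq_lintegral_ofReal hintegrable (by
      filter_upwards [ae_restrict_mem measurableSet_Ioc] with y hy
      exact Real.rpow_nonneg hy.1.le _), ← lintegral_indicator measurableSet_Ioi,
      ← lintegral_indicator measurableSet_Ioc]
    refine lintegral_mono fun l => ?_
    by_cases hl : 0 < l
    · by_cases hw' : w ≤ (L / l) ^ (r - 1)
      · have : l ≤ Λ := by
          have h1 : w ^ (1 / (r - 1)) ≤ L / l := by
            have h2 := Real.rpow_le_rpow hw.le hw' (z := 1 / (r - 1))
              (div_nonneg zero_le_one (by linarith))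
            rwa [← Real.rpow_mul (by positivity), mul_one_div_cancel (by linarith),
              Real.rpow_one] at h2
          rw [le_div_iff₀ hl] at h1
          rw [hΛ, Real.rpow_neg hw.le, ← div_eq_mul_inv, le_div_iff₀ (by positivity)]
          linarith
        rw [indicator_of_mem (show l ∈ Ioi (0:ℝ) from hl), indicator_of_mem (by exact hw'),
          indicator_of_mem (show l ∈ Ioc 0 Λ from ⟨hl, this⟩)]
      · rw [indicator_of_mem (show l ∈ Ioi (0:ℝ) from hl), indicator_of_notMem (by exact hw')]
        exact zero_le
    · rw [indicator_of_notMem (show l ∉ Ioi (0:ℝ) from hl)]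
      exact zero_le
  refine (mul_le_mul_right hle _).trans (le_of_eq ?_)
  rw [← ENNReal.ofReal_pow hw.le, ← ENNReal.ofReal_mul (by positivity),
    ← ENNReal.ofReal_mul (div_nonneg (by positivity) (by linarith))]
  congr 1
  have e : w ^ (r / (r - 1)) = w ^ 2 * w ^ (-(1 / (r - 1)) * (r - 2)) := by
    rw [← Real.rpow_natCast, ← Real.rpow_add hw]
    congr 1
    have : r - 1 ≠ 0 := by linarith
    field_simp
    push_cast
    ring
  rw [hΛ, Real.mul_rpow hL.le (by positivity), ← Real.rpow_mul hw.le, e]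
  ring

/-- Real interpolation between `L¹ → L^∞` and `L² → L²`, phrased through truncations `u ≤ h`
of the input size `u` and the output size `v`. -/
theorem lintegral_rpow_le_of_truncation {α : Type*} [MeasurableSpace α] {μ : Measure α} [SFinite μ]
    {r M A : ℝ} (hr : 2 < r) (hM : 0 < M) (hA : 0 < A) {N : ENNReal} {u v : α → ℝ}
    (hu : Measurable u) (hu0 : ∀ x, 0 ≤ u x) (hv : AEMeasurable v μ) (hv0 : ∀ x, 0 ≤ v x)
    (hAu : ∫⁻ x, ENNReal.ofReal (u x ^ (r / (r - 1))) ∂μ = ENNReal.ofReal A)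
    (H : ∀ h, 0 < h → ∃ v₂ : α → ENNReal, AEMeasurable v₂ μ ∧
      (∀ᵐ x ∂μ, ENNReal.ofReal (v x)
        ≤ ENNReal.ofReal M * ∫⁻ y in {y | h < u y}, ENNReal.ofReal (u y) ∂μ + v₂ x) ∧
      ∫⁻ x, v₂ x ^ 2 ∂μ ≤ N * ∫⁻ y in {y | u y ≤ h}, ENNReal.ofReal (u y) ^ 2 ∂μ) :
    ∫⁻ x, ENNReal.ofReal (v x ^ r) ∂μ
      ≤ ENNReal.ofReal r * (4 * N * (ENNReal.ofReal ((2 * M * A) ^ (r - 2) / (r - 2)) *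
        ENNReal.ofReal A)) := by
  set L := 2 * M * A with hL
  have hL0 : 0 < L := by positivity
  rw [lintegral_rpow_eq_lintegral_meas_lt_mul μ (Eventually.of_forall hv0) hv
    (by linarith : (0:ℝ) < r)]
  gcongr ENNReal.ofReal r * ?_
  have hsplit : ∀ l ∈ Ioi (0:ℝ), μ {x | l < v x} * ENNReal.ofReal (l ^ (r - 1))
      ≤ 4 * N * ∫⁻ y, ENNReal.ofReal (u y) ^ 2 *
        {l : ℝ | u y ≤ (L / l) ^ (r - 1)}.indicator
          (fun l => ENNReal.ofReal (l ^ (r - 3))) l ∂μ := by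
    intro l hl
    have hl0 : (0:ℝ) < l := hl
    set h := (L / l) ^ (r - 1) with hh
    have hh0 : 0 < h := by positivity
    obtain ⟨v₂, hv₂, hle, hN⟩ := H h hh0
    have hhigh : ENNReal.ofReal M * ∫⁻ y in {y | h < u y}, ENNReal.ofReal (u y) ∂μ
        ≤ ENNReal.ofReal (l / 2) := by
      calc _ ≤ ENNReal.ofReal M * ∫⁻ y in {y | h < u y},
            ENNReal.ofReal (l / L) * ENNReal.ofReal (u y ^ (r / (r - 1))) ∂μ := by
            gcongr ENNReal.ofReal M * ?_
            refine setLIntegral_mono' (measurableSet_lt measurable_const hu) fun y hy => ?_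
            have huy : 0 < u y := hh0.trans hy
            rw [← ENNReal.ofReal_mul (by positivity)]
            refine ENNReal.ofReal_le_ofReal ?_
            have h1 : L / l ≤ u y ^ (1 / (r - 1)) := by
              have h2 := Real.rpow_le_rpow hh0.le (le_of_lt hy) (z := 1 / (r - 1))
                (div_nonneg zero_le_one (by linarith))
              rwa [hh, ← Real.rpow_mul (by positivity), mul_one_div_cancel (by linarith),
                Real.rpow_one] at h2
            have e : u y ^ (r / (r - 1)) = u y * u y ^ (1 / (r - 1)) := by
              nth_rewrite 2 [← Real.rpow_one (u y)]
              rw [← Real.rpow_add huy]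
              congr 1
              have : r - 1 ≠ 0 := by linarith
              field_simp
              ring
            rw [e]
            calc u y = l / L * (u y * (L / l)) := by field_simp
              _ ≤ _ := by gcongr
        _ ≤ ENNReal.ofReal M * (ENNReal.ofReal (l / L) * ENNReal.ofReal A) := by
            gcongr
            rw [lintegral_const_mul _ (by fun_prop)]
            gcongr
            rw [← hAu]
            exact setLIntegral_le_lintegral _ _
        _ = _ := by
            rw [← ENNReal.ofReal_mul (by positivity), ← ENNReal.ofReal_mul (by positivity)]
            congr 1
            rw [hL]
            field_simp
    have hmeas : μ {x | l < v x} ≤ μ {x | ENNReal.ofReal (l / 2) ^ 2 ≤ v₂ x ^ 2} := by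
      refine measure_mono_ae ?_
      filter_upwards [hle] with x hx hlx
      have hlx' : l < v x := hlx
      have h1 : ENNReal.ofReal (l / 2) + ENNReal.ofReal (l / 2)
          ≤ ENNReal.ofReal (l / 2) + v₂ x := by
        rw [← ENNReal.ofReal_add (by positivity) (by positivity), add_halves]
        exact ((ENNReal.ofReal_le_ofReal hlx'.le).trans hx).trans (by gcongr)
      exact pow_le_pow_left₀ zero_le (ENNReal.le_of_add_le_add_left ENNReal.ofReal_ne_top h1) 2
    have hcheb := (mul_meas_ge_le_lintegral₀ (hv₂.pow_const 2)
      (ENNReal.ofReal (l / 2) ^ 2)).trans hN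
    have e1 : ENNReal.ofReal (l ^ (r - 1))
        = 4 * ENNReal.ofReal (l ^ (r - 3)) * ENNReal.ofReal (l / 2) ^ 2 := by
      rw [← ENNReal.ofReal_pow (by positivity),
        show (4 : ENNReal) = ENNReal.ofReal 4 by norm_num, ← ENNReal.ofReal_mul (by positivity),
        ← ENNReal.ofReal_mul (by positivity)]
      congr 1
      have : l ^ (r - 1) = l ^ (r - 3) * l ^ 2 := by
        rw [← Real.rpow_natCast, ← Real.rpow_add hl0]; congr 1; push_cast; ring
      rw [this]
      ring
    calc _ ≤ μ {x | ENNReal.ofReal (l / 2) ^ 2 ≤ v₂ x ^ 2} * ENNReal.ofReal (l ^ (r - 1)) := by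
          gcongr
      _ = 4 * ENNReal.ofReal (l ^ (r - 3)) * (ENNReal.ofReal (l / 2) ^ 2 *
          μ {x | ENNReal.ofReal (l / 2) ^ 2 ≤ v₂ x ^ 2}) := by rw [e1]; ring
      _ ≤ 4 * ENNReal.ofReal (l ^ (r - 3)) *
          (N * ∫⁻ y in {y | u y ≤ h}, ENNReal.ofReal (u y) ^ 2 ∂μ) := by gcongr
      _ = 4 * N * ∫⁻ y, {y | u y ≤ h}.indicator (fun y => ENNReal.ofReal (u y) ^ 2) y *
            ENNReal.ofReal (l ^ (r - 3)) ∂μ := by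
          have hms : MeasurableSet {y | u y ≤ h} := measurableSet_le hu measurable_const
          have hmf : Measurable fun y => ENNReal.ofReal (u y) ^ 2 := by fun_prop
          rw [lintegral_mul_const _ (hmf.indicator hms), lintegral_indicator hms]
          ring
      _ = _ := by
          congr 2
          ext y
          by_cases hy : u y ≤ h
          · rw [indicator_of_mem (by exact hy), indicator_of_mem (by exact hy)]
          · rw [indicator_of_notMem (by exact hy), indicator_of_notMem (by exact hy)]
            simp
  have hjoint : Measurable fun p : ℝ × α => ENNReal.ofReal (u p.2) ^ 2 *
      {l : ℝ | u p.2 ≤ (L / l) ^ (r - 1)}.indicator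
        (fun l => ENNReal.ofReal (l ^ (r - 3))) p.1 := by
    have hms : MeasurableSet {p : ℝ × α | u p.2 ≤ (L / p.1) ^ (r - 1)} :=
      measurableSet_le (by fun_prop) (by fun_prop)
    have hmf : Measurable fun p : ℝ × α => ENNReal.ofReal (p.1 ^ (r - 3)) := by fun_prop
    have := hmf.indicator hms
    exact Measurable.mul (by fun_prop) this
  refine (setLIntegral_mono' measurableSet_Ioi hsplit).trans ?_
  rw [lintegral_const_mul _ (hjoint.lintegral_prod_right')]
  gcongr 4 * N * ?_
  rw [lintegral_lintegral_swap hjoint.aemeasurable, ← hAu, ← lintegral_const_mul _ (by fun_prop)]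
  refine lintegral_mono fun y => ?_
  refine le_trans (le_of_eq ?_) (lintegral_truncated_rpow_le hr hL0 (hu0 y))
  dsimp only
  refine lintegral_const_mul _ ?_
  have hmf : Measurable fun l : ℝ => ENNReal.ofReal (l ^ (r - 3)) := by fun_prop
  exact hmf.indicator (measurableSet_le measurable_const (by fun_prop))

theorem lintegral_enorm_fourier_mul_sq_le {g : ℝ → ℂ} (h1 : Integrable g) (h2 : MemLp g 2)
    {c : ℝ} (hc : c ≠ 0) :
    ∫⁻ x, ‖𝓕 g (c * x)‖ₑ ^ 2 ≤ ENNReal.ofReal |c⁻¹| * ∫⁻ x, ‖g x‖ₑ ^ 2 := by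
  have hcont : Continuous (𝓕 g) :=
    VectorFourier.fourierIntegral_continuous Real.continuous_fourierChar
      (by exact continuous_inner) h1
  have hm : Measurable fun x => ‖𝓕 g x‖ₑ ^ 2 := hcont.measurable.enorm.pow_const 2
  rw [← lintegral_map hm (measurable_const_mul c), Real.map_volume_mul_left hc,
    lintegral_smul_measure, smul_eq_mul]
  exact mul_le_mul_right (lintegral_enorm_fourier_sq_le h1 h2) _

/-- The Hankel-type transform with kernel `hankelJ a (x * y)` and measure `y ^ a dy`. -/
noncomputable def hankelOp (a : ℝ) (f : ℝ → ℂ) (x : ℝ) : ℂ :=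
  ∫ y in Ioi (0:ℝ), (hankelJ a (x * y) : ℂ) * f y * ((y ^ a : ℝ) : ℂ)

/-- Measurable functions all of whose powers have all moments on `(0, ∞)`. -/
def RapidlyIntegrable (f : ℝ → ℂ) : Prop :=
  Measurable f ∧ ∀ q b : ℝ, 1 ≤ q → 0 ≤ b → IntegrableOn (fun y => ‖f y‖ ^ q * y ^ b) (Ioi 0)

theorem RapidlyIntegrable.integrableOn_mul_rpow {f : ℝ → ℂ} (hf : RapidlyIntegrable f) {b : ℝ}
    (hb : 0 ≤ b) : IntegrableOn (fun y => f y * ((y ^ b : ℝ) : ℂ)) (Ioi 0) := by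
  refine (hf.2 1 b le_rfl hb).mono' ?_ ?_
  · have := hf.1
    exact Measurable.aestronglyMeasurable (by fun_prop)
  · filter_upwards [ae_restrict_mem measurableSet_Ioi] with y hy
    have : (0:ℝ) ≤ y ^ b := Real.rpow_nonneg (le_of_lt hy) b
    rw [norm_mul, Complex.norm_real, Real.norm_of_nonneg this, Real.rpow_one]

theorem exists_hankelOp_sq_le {a : ℝ} (ha : 0 ≤ a) :
    ∃ N : ℝ, 0 < N ∧ ∀ f, RapidlyIntegrable f →
      ∫⁻ x in Ioi (0:ℝ), ‖hankelOp a f x‖ₑ ^ 2 * ENNReal.ofReal (x ^ a)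
        ≤ ENNReal.ofReal N * ∫⁻ y in Ioi (0:ℝ), ‖f y‖ₑ ^ 2 * ENNReal.ofReal (y ^ a) := by
  obtain ⟨A, B, D, M, -, hR⟩ := exists_hankelJ_asymptotics ha
  set α : ℂ := (A + Complex.I * B) / 2 with hα
  set β : ℂ := (A - Complex.I * B) / 2 with hβ
  set N : ENNReal := 3 * (‖α‖ₑ ^ 2 * ENNReal.ofReal (2 * Real.pi)
    + ‖β‖ₑ ^ 2 * ENNReal.ofReal (2 * Real.pi) + ENNReal.ofReal D ^ 2 * 16) with hN
  have hNtop : N ≠ ⊤ := by finiteness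
  suffices h : ∀ f, RapidlyIntegrable f →
      ∫⁻ x in Ioi (0:ℝ), ‖hankelOp a f x‖ₑ ^ 2 * ENNReal.ofReal (x ^ a)
        ≤ N * ∫⁻ y in Ioi (0:ℝ), ‖f y‖ₑ ^ 2 * ENNReal.ofReal (y ^ a) by
    refine ⟨N.toReal + 1, by positivity, fun f hf => (h f hf).trans ?_⟩
    gcongr
    rw [ENNReal.ofReal_add (by positivity) zero_le_one, ENNReal.ofReal_toReal hNtop]
    exact le_self_add
  intro f hf
  have hfm := hf.1
  set g : ℝ → ℂ := (Ioi (0:ℝ)).indicator fun y => f y * ((y ^ (a / 2) : ℝ) : ℂ) with hg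
  have hgm : Measurable g := Measurable.indicator (by fun_prop) measurableSet_Ioi
  have hg1 : Integrable g :=
    (integrable_indicator_iff measurableSet_Ioi).2 (hf.integrableOn_mul_rpow (by positivity))
  have hgval : ∀ y ∈ Ioi (0:ℝ), g y = f y * ((y ^ (a / 2) : ℝ) : ℂ) := fun y hy => by
    rw [hg, indicator_of_mem hy]
  have hhalf : ∀ y ∈ Ioi (0:ℝ), y ^ (a / 2) * y ^ (a / 2) = y ^ a := fun y hy => by
    rw [← Real.rpow_add hy, add_halves]
  have hgsq : ∫⁻ y, ‖g y‖ₑ ^ 2 = ∫⁻ y in Ioi (0:ℝ), ‖f y‖ₑ ^ 2 * ENNReal.ofReal (y ^ a) := by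
    rw [← lintegral_indicator measurableSet_Ioi]
    refine lintegral_congr fun y => ?_
    by_cases hy : y ∈ Ioi (0:ℝ)
    · have h0 : (0:ℝ) ≤ y ^ (a / 2) := Real.rpow_nonneg (le_of_lt hy) _
      rw [indicator_of_mem hy, hgval y hy, ← hhalf y hy, ENNReal.ofReal_mul h0, enorm_mul,
        mul_pow, ← ofReal_norm (((y ^ (a / 2) : ℝ) : ℂ)), Complex.norm_real,
        Real.norm_of_nonneg h0, pow_two (ENNReal.ofReal _)]
    · rw [indicator_of_notMem hy, hg, indicator_of_notMem hy]
      simp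
  have hg2 : MemLp g 2 := by
    rw [memLp_two_iff_integrable_sq_norm hgm.aestronglyMeasurable]
    refine (integrable_indicator_iff measurableSet_Ioi).2
      (hf.2 2 a (by norm_num) ha) |>.congr (Eventually.of_forall fun y => ?_)
    by_cases hy : y ∈ Ioi (0:ℝ)
    · dsimp only
      rw [indicator_of_mem hy, hgval y hy, norm_mul, mul_pow, ← hhalf y hy, Complex.norm_real,
        Real.norm_of_nonneg (Real.rpow_nonneg (le_of_lt hy) _)]
      rw [Real.rpow_two]
      ring
    · dsimp only
      rw [indicator_of_notMem hy, hg, indicator_of_notMem hy]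
      simp
  set G : ℝ → ℂ := fun x => ∫ y : ℝ, Complex.exp (-(x * y) * Complex.I) * g y with hG
  have hGF : ∀ x, G x = 𝓕 g ((2 * Real.pi)⁻¹ * x) := fun x => by
    rw [Real.fourier_eq']
    refine integral_congr_ae (Eventually.of_forall fun y => ?_)
    simp only [smul_eq_mul]
    congr 3
    have := Real.pi_pos.ne'
    simp
    field_simp
  have hGF' : ∀ x, G (-x) = 𝓕 g (-(2 * Real.pi)⁻¹ * x) := fun x => by
    rw [hGF]; ring_nf
  set E : ℝ → ENNReal := fun x =>
    ∫⁻ y in Ioi (0:ℝ), ENNReal.ofReal (min 1 (x * y)⁻¹) * ‖g y‖ₑ with hE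
  have hpt : ∀ x ∈ Ioi (0:ℝ), ‖hankelOp a f x‖ₑ ^ 2 * ENNReal.ofReal (x ^ a)
      ≤ 3 * (‖α‖ₑ ^ 2 * ‖G x‖ₑ ^ 2 + ‖β‖ₑ ^ 2 * ‖G (-x)‖ₑ ^ 2
        + ENNReal.ofReal D ^ 2 * E x ^ 2) := by
    intro x hx
    have hx0 : (0:ℝ) < x := hx
    set R : ℝ → ℂ := fun y => (((x * y) ^ (a / 2) * hankelJ a (x * y)
      - (A * Real.cos (x * y) + B * Real.sin (x * y)) : ℝ) : ℂ) with hRdef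
    have hjc := continuous_hankelJ ha
    have hRm : Measurable R := by
      have := hjc.measurable
      fun_prop
    have hRb : ∀ y ∈ Ioi (0:ℝ), ‖R y‖ ≤ D * min 1 (x * y)⁻¹ := fun y hy => by
      rw [hRdef, Complex.norm_real, Real.norm_eq_abs]
      exact hR _ (mul_pos hx0 hy)
    have hD0 : 0 ≤ D := by
      have h := (norm_nonneg _).trans (hRb 1 (by simp : (1:ℝ) ∈ Ioi 0))
      have : 0 < min 1 (x * 1)⁻¹ := by positivity
      exact nonneg_of_mul_nonneg_left h this
    have hexp : ∀ s : ℝ, Integrable fun y : ℝ => Complex.exp (-(s * y) * Complex.I) * g y :=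
      fun s => hg1.bdd_mul (c := 1) (Continuous.aestronglyMeasurable (by fun_prop))
        (Eventually.of_forall fun y => by
          rw [← Complex.ofReal_mul, ← Complex.ofReal_neg, Complex.norm_exp_ofReal_mul_I])
    have hRi : IntegrableOn (fun y => R y * g y) (Ioi 0) :=
      hg1.integrableOn.bdd_mul (c := D) hRm.aestronglyMeasurable (by
        filter_upwards [ae_restrict_mem measurableSet_Ioi] with y hy
        exact (hRb y hy).trans (mul_le_of_le_one_right hD0 (min_le_left _ _)))
    have hGset : ∀ s : ℝ, G s = ∫ y in Ioi (0:ℝ), Complex.exp (-(s * y) * Complex.I) * g y :=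
      fun s => by
        refine (setIntegral_eq_integral_of_forall_compl_eq_zero fun y hy => ?_).symm
        rw [hg, indicator_of_notMem hy, mul_zero]
    have hdecomp : ((x ^ (a / 2) : ℝ) : ℂ) * hankelOp a f x
        = α * G x + β * G (-x) + ∫ y in Ioi (0:ℝ), R y * g y := by
      rw [hGset, hGset, ← integral_const_mul, ← integral_const_mul, ← integral_add,
        ← integral_add _ hRi, hankelOp, ← integral_const_mul]
      · refine setIntegral_congr_fun measurableSet_Ioi fun y hy => ?_
        simp only [hRdef]
        rw [hgval y hy, Real.mul_rpow hx0.le (le_of_lt hy), ← hhalf y hy]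
        push_cast
        rw [Complex.cos, Complex.sin, hα, hβ]
        have e1 : -(-(x:ℂ) * y) * Complex.I = x * y * Complex.I := by ring
        rw [e1]
        ring
      · exact ((hexp x).integrableOn.const_mul α).add ((hexp (-x)).integrableOn.const_mul β)
      · exact (hexp x).integrableOn.const_mul α
      · exact (hexp (-x)).integrableOn.const_mul β
    have hRE : ‖∫ y in Ioi (0:ℝ), R y * g y‖ₑ ≤ ENNReal.ofReal D * E x := by
      refine (enorm_integral_le_lintegral_enorm _).trans ?_
      rw [hE, ← lintegral_const_mul _ (by fun_prop)]
      refine setLIntegral_mono' measurableSet_Ioi fun y hy => ?_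
      rw [enorm_mul, ← mul_assoc, ← ENNReal.ofReal_mul hD0, ← ofReal_norm]
      gcongr
      exact hRb y hy
    have hleft : ‖hankelOp a f x‖ₑ ^ 2 * ENNReal.ofReal (x ^ a)
        = ‖((x ^ (a / 2) : ℝ) : ℂ) * hankelOp a f x‖ₑ ^ 2 := by
      have h0 : (0:ℝ) ≤ x ^ (a / 2) := Real.rpow_nonneg hx0.le _
      rw [← hhalf x hx, ENNReal.ofReal_mul h0, enorm_mul,
        mul_pow, ← ofReal_norm (((x ^ (a / 2) : ℝ) : ℂ)), Complex.norm_real,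
        Real.norm_of_nonneg h0, pow_two (ENNReal.ofReal _)]
      ring
    have hcube : ∀ p q s : ENNReal, (p + q + s) ^ 2 ≤ 3 * (p ^ 2 + q ^ 2 + s ^ 2) := by
      intro p q s
      have h := ENNReal.rpow_sum_le_const_mul_sum_rpow Finset.univ ![p, q, s]
        (p := 2) (by norm_num)
      norm_num [Fin.sum_univ_three] at h
      exact h
    rw [hleft, hdecomp, ← mul_pow, ← mul_pow, ← mul_pow]
    refine le_trans ?_ (hcube _ _ _)
    gcongr
    refine (enorm_add_le _ _).trans (add_le_add ((enorm_add_le _ _).trans ?_) hRE)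
    rw [enorm_mul, enorm_mul]
  have hpi : (2 * Real.pi)⁻¹ ≠ 0 := by have := Real.pi_pos; positivity
  have habs : |((2 * Real.pi)⁻¹)⁻¹| = 2 * Real.pi := by
    rw [inv_inv, abs_of_pos Real.two_pi_pos]
  have hGint : ∫⁻ x in Ioi (0:ℝ), ‖G x‖ₑ ^ 2 ≤ ENNReal.ofReal (2 * Real.pi) * ∫⁻ y, ‖g y‖ₑ ^ 2 := by
    simp only [hGF]
    refine (setLIntegral_le_lintegral _ _).trans ?_
    simpa only [habs] using lintegral_enorm_fourier_mul_sq_le hg1 hg2 hpi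
  have hGint' : ∫⁻ x in Ioi (0:ℝ), ‖G (-x)‖ₑ ^ 2
      ≤ ENNReal.ofReal (2 * Real.pi) * ∫⁻ y, ‖g y‖ₑ ^ 2 := by
    simp only [hGF']
    refine (setLIntegral_le_lintegral _ _).trans ?_
    simpa only [inv_neg, abs_neg, habs] using
      lintegral_enorm_fourier_mul_sq_le hg1 hg2 (neg_ne_zero.2 hpi)
  have hEint : ∫⁻ x in Ioi (0:ℝ), E x ^ 2 ≤ 16 * ∫⁻ y, ‖g y‖ₑ ^ 2 :=
    (lintegral_min_kernel_sq_le hgm.enorm).trans 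
      (mul_le_mul_right (setLIntegral_le_lintegral _ _) _)
  have hFm : Continuous (𝓕 g) :=
    VectorFourier.fourierIntegral_continuous Real.continuous_fourierChar
      (by exact continuous_inner) hg1
  have hGm : Measurable G := by
    rw [show G = fun x => 𝓕 g ((2 * Real.pi)⁻¹ * x) from funext hGF]
    exact (hFm.comp (by fun_prop)).measurable
  have hEm : Measurable E := Measurable.lintegral_prod_right' (f := fun p : ℝ × ℝ =>
    ENNReal.ofReal (min 1 (p.1 * p.2)⁻¹) * ‖g p.2‖ₑ) (by fun_prop)
  rw [← hgsq]
  calc _ ≤ _ := setLIntegral_mono' measurableSet_Ioi hpt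
    _ = 3 * (‖α‖ₑ ^ 2 * (∫⁻ x in Ioi (0:ℝ), ‖G x‖ₑ ^ 2)
        + ‖β‖ₑ ^ 2 * (∫⁻ x in Ioi (0:ℝ), ‖G (-x)‖ₑ ^ 2)
        + ENNReal.ofReal D ^ 2 * ∫⁻ x in Ioi (0:ℝ), E x ^ 2) := by
      rw [lintegral_const_mul _ (by fun_prop), lintegral_add_left (by fun_prop),
        lintegral_add_left (by fun_prop), lintegral_const_mul _ (by fun_prop),
        lintegral_const_mul _ (by fun_prop), lintegral_const_mul _ (by fun_prop)]
    _ ≤ 3 * (‖α‖ₑ ^ 2 * (ENNReal.ofReal (2 * Real.pi) * ∫⁻ y, ‖g y‖ₑ ^ 2)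
        + ‖β‖ₑ ^ 2 * (ENNReal.ofReal (2 * Real.pi) * ∫⁻ y, ‖g y‖ₑ ^ 2)
        + ENNReal.ofReal D ^ 2 * (16 * ∫⁻ y, ‖g y‖ₑ ^ 2)) := by gcongr
    _ = _ := by rw [hN]; ring

theorem RapidlyIntegrable.indicator {f : ℝ → ℂ} (hf : RapidlyIntegrable f) {s : Set ℝ}
    (hs : MeasurableSet s) : RapidlyIntegrable (s.indicator f) := by
  refine ⟨hf.1.indicator hs, fun q b hq hb => (hf.2 q b hq hb).mono' ?_ ?_⟩
  · have := hf.1.indicator hs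
    exact Measurable.aestronglyMeasurable (by fun_prop)
  · filter_upwards [ae_restrict_mem measurableSet_Ioi] with y hy
    have hy0 : (0:ℝ) ≤ y ^ b := Real.rpow_nonneg (le_of_lt hy) b
    rw [Real.norm_of_nonneg (by positivity)]
    gcongr
    exact norm_indicator_le_norm_self f y

theorem measurable_hankelOp {a : ℝ} (ha : 0 ≤ a) {f : ℝ → ℂ} (hf : Measurable f) :
    Measurable (hankelOp a f) := by
  have hj := (continuous_hankelJ ha).measurable
  have : Measurable fun p : ℝ × ℝ =>
      (hankelJ a (p.1 * p.2) : ℂ) * f p.2 * ((p.2 ^ a : ℝ) : ℂ) := by fun_prop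
  exact this.stronglyMeasurable.integral_prod_right'.measurable

theorem integrableOn_hankel_kernel_mul {a : ℝ} (ha : 0 ≤ a) {f : ℝ → ℂ} (hf : RapidlyIntegrable f)
    {x : ℝ} (hx : 0 < x) :
    IntegrableOn (fun y => (hankelJ a (x * y) : ℂ) * f y * ((y ^ a : ℝ) : ℂ)) (Ioi 0) := by
  obtain ⟨-, -, -, M, hM, -⟩ := exists_hankelJ_asymptotics ha
  have hj := (continuous_hankelJ ha).measurable
  simp only [mul_assoc]
  refine (hf.integrableOn_mul_rpow ha).bdd_mul (c := M)
    (Measurable.aestronglyMeasurable (by fun_prop)) ?_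
  filter_upwards [ae_restrict_mem measurableSet_Ioi] with y hy
  rw [Complex.norm_real, Real.norm_eq_abs]
  exact hM _ (mul_pos hx hy)

theorem enorm_hankelOp_le {a M : ℝ} (hM : ∀ z, 0 < z → |hankelJ a z| ≤ M)
    {f : ℝ → ℂ} (hf : Measurable f) {x : ℝ} (hx : 0 < x) :
    ‖hankelOp a f x‖ₑ
      ≤ ENNReal.ofReal M * ∫⁻ y in Ioi (0:ℝ), ‖f y‖ₑ * ENNReal.ofReal (y ^ a) := by
  refine (enorm_integral_le_lintegral_enorm _).trans ?_
  rw [← lintegral_const_mul _ (by fun_prop)]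
  refine setLIntegral_mono' measurableSet_Ioi fun y hy => ?_
  have hy0 : (0:ℝ) ≤ y ^ a := Real.rpow_nonneg (le_of_lt hy) a
  rw [enorm_mul, enorm_mul, mul_assoc, ← ofReal_norm (((y ^ a : ℝ) : ℂ)), Complex.norm_real,
    Real.norm_of_nonneg hy0, ← ofReal_norm ((hankelJ a (x * y) : ℝ) : ℂ), Complex.norm_real,
    Real.norm_eq_abs]
  gcongr
  exact hM _ (mul_pos hx hy)

/-- The measure `x ^ a dx` on `(0, ∞)`. -/
noncomputable def powerMeasure (a : ℝ) : Measure ℝ :=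
  (volume.restrict (Ioi (0:ℝ))).withDensity fun x => ENNReal.ofReal (x ^ a)

instance (a : ℝ) : SFinite (powerMeasure a) := by unfold powerMeasure; infer_instance

theorem lintegral_powerMeasure (a : ℝ) {F : ℝ → ENNReal} (hF : Measurable F) :
    ∫⁻ x, F x ∂powerMeasure a = ∫⁻ x in Ioi (0:ℝ), F x * ENNReal.ofReal (x ^ a) := by
  rw [powerMeasure, lintegral_withDensity_eq_lintegral_mul _ (by fun_prop) hF]
  simp only [Pi.mul_apply, mul_comm]

theorem ae_powerMeasure_pos (a : ℝ) : ∀ᵐ x ∂powerMeasure a, 0 < x :=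
  (withDensity_absolutelyContinuous _ _).ae_le (ae_restrict_mem measurableSet_Ioi)

/-- The `L^{r'} → L^r` bound for the Hankel-type transform. -/
theorem exists_hankelOp_rpow_le {a r : ℝ} (ha : 0 ≤ a) (hr : 2 ≤ r) :
    ∃ C : ℝ, 0 < C ∧ ∀ f, RapidlyIntegrable f →
      ∫⁻ x in Ioi (0:ℝ), ENNReal.ofReal (‖hankelOp a f x‖ ^ r) * ENNReal.ofReal (x ^ a)
        ≤ ENNReal.ofReal
          (C * (∫ y in Ioi (0:ℝ), ‖f y‖ ^ (r / (r - 1)) * y ^ a) ^ (r - 1)) := by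
  obtain ⟨N, hN, hL2⟩ := exists_hankelOp_sq_le ha
  have hA : ∀ q : ℝ, 1 ≤ q → ∀ f, RapidlyIntegrable f →
      ∫⁻ y in Ioi (0:ℝ), ENNReal.ofReal (‖f y‖ ^ q) * ENNReal.ofReal (y ^ a)
        = ENNReal.ofReal (∫ y in Ioi (0:ℝ), ‖f y‖ ^ q * y ^ a) := by
    intro q hq f hf
    rw [ofReal_integral_eq_lintegral_ofReal (hf.2 q a hq ha)]
    · exact lintegral_congr fun y => (ENNReal.ofReal_mul (by positivity)).symm
    · filter_upwards [ae_restrict_mem measurableSet_Ioi] with y hy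
      exact mul_nonneg (by positivity) (Real.rpow_nonneg (le_of_lt hy) a)
  have hsq : ∀ z : ℂ, ENNReal.ofReal (‖z‖ ^ (2:ℝ)) = ‖z‖ₑ ^ 2 := fun z => by
    rw [Real.rpow_two, ENNReal.ofReal_pow (norm_nonneg _), ofReal_norm]
  rcases hr.eq_or_lt with rfl | hr
  · refine ⟨N, hN, fun f hf => ?_⟩
    have h := hL2 f hf
    have h2 := hA 2 (by norm_num) f hf
    simp only [hsq] at h2 ⊢
    rw [h2, ← ENNReal.ofReal_mul hN.le] at h
    norm_num at h ⊢
    exact h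
  obtain ⟨-, -, -, M₀, hM₀, -⟩ := exists_hankelJ_asymptotics ha
  set M := M₀ + 1 with hMdef
  have hM₀' : 0 ≤ M₀ := (abs_nonneg _).trans (hM₀ 1 one_pos)
  have hM0 : 0 < M := by linarith
  have hM : ∀ z, 0 < z → |hankelJ a z| ≤ M := fun z hz => (hM₀ z hz).trans (by linarith)
  have hr2 : 0 < r - 2 := by linarith
  refine ⟨r * (4 * N * ((2 * M) ^ (r - 2) / (r - 2))), by positivity, fun f hf => ?_⟩
  have hp1 : 1 ≤ r / (r - 1) := by rw [le_div_iff₀ (by linarith)]; linarith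
  have hAf := hA _ hp1 f hf
  set A := ∫ y in Ioi (0:ℝ), ‖f y‖ ^ (r / (r - 1)) * y ^ a with hAdef
  have hfm := hf.1
  have hA0 : 0 ≤ A := setIntegral_nonneg measurableSet_Ioi fun y hy =>
    mul_nonneg (by positivity) (Real.rpow_nonneg (le_of_lt hy) a)
  rcases hA0.eq_or_lt with hA0 | hA0
  · have hae : ∀ᵐ y ∂volume.restrict (Ioi (0:ℝ)), f y = 0 := by
      have h0 : ∫⁻ y in Ioi (0:ℝ), ENNReal.ofReal (‖f y‖ ^ (r / (r - 1))) *
          ENNReal.ofReal (y ^ a) = 0 := by rw [hAf, ← hA0, ENNReal.ofReal_zero]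
      rw [lintegral_eq_zero_iff (by fun_prop)] at h0
      filter_upwards [h0, ae_restrict_mem measurableSet_Ioi] with y hy hy0
      have hya : 0 < y ^ a := Real.rpow_pos_of_pos hy0 a
      by_contra hne
      have : 0 < ‖f y‖ ^ (r / (r - 1)) := Real.rpow_pos_of_pos (norm_pos_iff.2 hne) _
      have h3 : 0 < ENNReal.ofReal (‖f y‖ ^ (r / (r - 1))) * ENNReal.ofReal (y ^ a) :=
        ENNReal.mul_pos (ENNReal.ofReal_pos.2 this).ne' (ENNReal.ofReal_pos.2 hya).ne'
      exact h3.ne' hy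
    have hz : ∀ x, hankelOp a f x = 0 := fun x => by
      refine integral_eq_zero_of_ae ?_
      filter_upwards [hae] with y hy
      simp [hy]
    simp [hz, Real.zero_rpow (by linarith : r ≠ 0)]
  · have hTm := measurable_hankelOp ha hfm
    have key := lintegral_rpow_le_of_truncation (μ := powerMeasure a) hr hM0 hA0
      (N := ENNReal.ofReal N) (u := fun y => ‖f y‖) (v := fun x => ‖hankelOp a f x‖)
      hfm.norm (fun _ => norm_nonneg _) hTm.norm.aemeasurable (fun _ => norm_nonneg _)
      (by rw [lintegral_powerMeasure a (by fun_prop), hAf]) ?_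
    · rw [lintegral_powerMeasure a (by fun_prop)] at key
      refine key.trans (le_of_eq ?_)
      rw [show (4 : ENNReal) = ENNReal.ofReal 4 by norm_num, ← ENNReal.ofReal_mul (by positivity),
        ← ENNReal.ofReal_mul (by positivity), ← ENNReal.ofReal_mul (by positivity),
        ← ENNReal.ofReal_mul (by positivity)]
      congr 1
      have e : A ^ (r - 1) = A ^ (r - 2) * A := by
        nth_rewrite 3 [← Real.rpow_one A]; rw [← Real.rpow_add hA0]; congr 1; ring
      rw [Real.mul_rpow (by positivity) hA0.le, e]
      ring
    · intro h hh
      have hs₁ : MeasurableSet {y | h < ‖f y‖} := measurableSet_lt measurable_const hfm.norm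
      have hs₂ : MeasurableSet {y | ‖f y‖ ≤ h} := measurableSet_le hfm.norm measurable_const
      set f₁ := {y | h < ‖f y‖}.indicator f with hf₁
      set f₂ := {y | ‖f y‖ ≤ h}.indicator f with hf₂
      have hR₁ : RapidlyIntegrable f₁ := hf.indicator hs₁
      have hR₂ : RapidlyIntegrable f₂ := hf.indicator hs₂
      have hm₁ := hR₁.1
      have hm₂ := hR₂.1
      have hsum : ∀ y, f y = f₁ y + f₂ y := fun y => by
        by_cases hy : h < ‖f y‖
        · rw [hf₁, hf₂, indicator_of_mem (by exact hy), indicator_of_notMem (by simpa using hy),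
            add_zero]
        · rw [hf₁, hf₂, indicator_of_notMem (by exact hy), indicator_of_mem (by simpa using hy),
            zero_add]
      have hT₂ := measurable_hankelOp ha hm₂
      refine ⟨fun x => ‖hankelOp a f₂ x‖ₑ, hT₂.enorm.aemeasurable, ?_, ?_⟩
      · filter_upwards [ae_powerMeasure_pos a] with x hx
        have hadd : hankelOp a f x = hankelOp a f₁ x + hankelOp a f₂ x := by
          rw [hankelOp, hankelOp, hankelOp, ← integral_add
            (integrableOn_hankel_kernel_mul ha hR₁ hx) (integrableOn_hankel_kernel_mul ha hR₂ hx)]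
          congr 1
          ext y
          rw [hsum y]
          ring
        rw [ofReal_norm, hadd]
        refine (enorm_add_le _ _).trans (add_le_add ((enorm_hankelOp_le hM hm₁ hx).trans ?_) le_rfl)
        refine mul_le_mul_right (le_of_eq ?_) _
        rw [← lintegral_powerMeasure a hm₁.enorm, ← lintegral_indicator hs₁]
        refine lintegral_congr fun y => ?_
        simp only [ofReal_norm]
        rw [hf₁, enorm_indicator_eq_indicator_enorm]
      · rw [lintegral_powerMeasure a (by fun_prop)]
        refine (hL2 f₂ hR₂).trans (mul_le_mul_right (le_of_eq ?_) _)
        rw [← lintegral_powerMeasure a (by fun_prop), ← lintegral_indicator hs₂]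
        refine lintegral_congr fun y => ?_
        simp only [ofReal_norm]
        by_cases hy : ‖f y‖ ≤ h
        · rw [hf₂, indicator_of_mem (by exact hy), indicator_of_mem (by exact hy)]
        · rw [hf₂, indicator_of_notMem (by exact hy), indicator_of_notMem (by exact hy)]
          simp

theorem rpow_mul_besselJ_eq_hankelJ (a : ℝ) {z : ℝ} (hz : 0 < z) :
    ((z ^ ((1 - a) / 2) : ℝ) : ℂ) * besselJ (((a - 1) / 2 : ℝ) : ℂ) z = (hankelJ a z : ℂ) := by
  unfold besselJ hankelJ
  rw [← tsum_mul_left, Complex.ofReal_tsum]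
  refine tsum_congr fun k => ?_
  have hpow : (((z : ℂ) / 2) ^ (2 * (k : ℂ) + (((a - 1) / 2 : ℝ) : ℂ)))
      = (((z / 2) ^ (2 * (k : ℝ) + (a - 1) / 2) : ℝ) : ℂ) := by
    rw [Complex.ofReal_cpow (by positivity)]
    push_cast
    rfl
  have hΓ : Complex.Gamma ((k : ℂ) + 1) = (Real.Gamma (k + 1) : ℂ) := by
    rw [← Complex.Gamma_ofReal]; push_cast; rfl
  have hΓ' : Complex.Gamma ((((a - 1) / 2 : ℝ) : ℂ) + k + 1)
      = (Real.Gamma ((a - 1) / 2 + k + 1) : ℂ) := by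
    rw [← Complex.Gamma_ofReal]; push_cast; rfl
  have hreal : z ^ ((1 - a) / 2) * (z / 2) ^ (2 * (k : ℝ) + (a - 1) / 2)
      = 2 ^ (-(2 * (k : ℝ) + (a - 1) / 2)) * (z ^ 2) ^ k := by
    rw [Real.div_rpow hz.le zero_le_two, Real.rpow_neg zero_le_two, ← mul_div_assoc,
      ← Real.rpow_add hz, div_eq_inv_mul, ← pow_mul, ← Real.rpow_natCast]
    congr 2
    push_cast
    ring
  rw [hpow, hΓ, hΓ', mul_left_comm, ← Complex.ofReal_mul (z ^ _), hreal, hankelCoeff]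
  push_cast
  ring

theorem exists_Skernel_eq (a t : ℝ) :
    ∃ (c : ℂ) (σ : ℝ), ‖c‖ = 1 ∧ ∀ x y : ℝ, 0 < x → 0 < y → t ≠ 0 →
      Skernel a x y t = c * (((2 * |t|) ^ (-(a + 1) / 2) : ℝ) : ℂ) *
        (hankelJ a (x * y / (2 * |t|)) : ℂ) *
        Complex.exp (((σ * ((x ^ 2 + y ^ 2) / (4 * |t|)) : ℝ) : ℂ) * Complex.I) := by
  rcases lt_or_ge 0 t with h | h
  · refine ⟨Complex.exp (((-((a + 1) * Real.pi / 4) : ℝ) : ℂ) * Complex.I), 1,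
      Complex.norm_exp_ofReal_mul_I _, fun x y hx hy ht => ?_⟩
    rw [Skernel, if_pos h, ← rpow_mul_besselJ_eq_hankelJ a (by positivity), ← mul_assoc]
    congr 1
    · congr 4
      push_cast
      ring
    · congr 1
      push_cast
      ring
  · refine ⟨Complex.exp ((((a + 1) * Real.pi / 4 : ℝ) : ℂ) * Complex.I), -1,
      Complex.norm_exp_ofReal_mul_I _, fun x y hx hy ht => ?_⟩
    rw [Skernel, if_neg h.not_gt, ← rpow_mul_besselJ_eq_hankelJ a (by positivity), ← mul_assoc]
    congr 1
    · congr 4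
      ring
    · congr 1
      push_cast
      ring

/-- A function of class `SPlus`, modulated by a unimodular phase and extended by zero. -/
noncomputable def modulate (s : ℝ) (φ : ℝ → ℂ) : ℝ → ℂ :=
  (Ioi (0:ℝ)).indicator fun y => Complex.exp (((s * y ^ 2 : ℝ) : ℂ) * Complex.I) * φ y

theorem norm_modulate (s : ℝ) (φ : ℝ → ℂ) {y : ℝ} (hy : 0 < y) : ‖modulate s φ y‖ = ‖φ y‖ := by
  rw [modulate, indicator_of_mem (mem_Ioi.2 hy), norm_mul, Complex.norm_exp_ofReal_mul_I, one_mul]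

theorem SPlus.exists_norm_mul_pow_le {φ : ℝ → ℂ} (hφ : SPlus φ) (m : ℕ) :
    ∃ C : ℝ, 0 ≤ C ∧ ∀ y > (0:ℝ), ‖φ y‖ * y ^ m ≤ C := by
  obtain ⟨C, hC⟩ := hφ.2 m 0
  refine ⟨C, (norm_nonneg _).trans (hC 1 one_pos), fun y hy => ?_⟩
  have := hC y hy
  rw [DIter, norm_mul, norm_pow, Complex.norm_real, Real.norm_of_nonneg hy.le] at this
  linarith

theorem SPlus.rapidlyIntegrable_modulate {φ : ℝ → ℂ} (hφ : SPlus φ) (s : ℝ) :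
    RapidlyIntegrable (modulate s φ) := by
  have hmeas : Measurable (modulate s φ) := by
    rw [modulate, ← piecewise_eq_indicator]
    refine ContinuousOn.measurable_piecewise ?_ continuousOn_const measurableSet_Ioi
    exact ContinuousOn.mul (by fun_prop) hφ.1.continuousOn
  refine ⟨hmeas, fun q b hq hb => ?_⟩
  obtain ⟨C₀, hC₀, h₀⟩ := hφ.exists_norm_mul_pow_le 0
  obtain ⟨C₁, hC₁, h₁⟩ := hφ.exists_norm_mul_pow_le 2
  obtain ⟨C₂, hC₂, h₂⟩ := hφ.exists_norm_mul_pow_le ⌈b⌉₊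
  obtain ⟨C₃, hC₃, h₃⟩ := hφ.exists_norm_mul_pow_le (⌈b⌉₊ + 2)
  have hintegrable : IntegrableOn (fun y : ℝ => C₀ ^ (q - 1) * (C₀ + C₁ + C₂ + C₃) * (1 + y ^ 2)⁻¹)
      (Ioi 0) := (integrable_inv_one_add_sq.const_mul _).integrableOn
  refine hintegrable.mono' (by fun_prop) ?_
  filter_upwards [ae_restrict_mem measurableSet_Ioi] with y hy
  have hy' : (0:ℝ) < y := hy
  have hb' : y ^ b ≤ 1 + y ^ ⌈b⌉₊ := by
    rcases le_total y 1 with h | h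
    · exact (Real.rpow_le_one hy'.le h hb).trans (le_add_of_nonneg_right (by positivity))
    · refine (Real.rpow_le_rpow_of_exponent_le h (Nat.le_ceil b)).trans ?_
      rw [Real.rpow_natCast]
      linarith
  have hq' : ‖φ y‖ ^ q ≤ C₀ ^ (q - 1) * ‖φ y‖ := by
    rcases (norm_nonneg (φ y)).eq_or_lt with h | h
    · rw [← h, Real.zero_rpow (by linarith), mul_zero]
    · have : ‖φ y‖ ≤ C₀ := by simpa using h₀ y hy
      calc ‖φ y‖ ^ q = ‖φ y‖ ^ (q - 1) * ‖φ y‖ := by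
            rw [← Real.rpow_add_one h.ne', sub_add_cancel]
        _ ≤ _ := by gcongr
  rw [Real.norm_of_nonneg (by positivity), norm_modulate s φ hy, ← div_eq_mul_inv,
    le_div_iff₀ (by positivity)]
  calc ‖φ y‖ ^ q * y ^ b * (1 + y ^ 2)
      ≤ C₀ ^ (q - 1) * ‖φ y‖ * (1 + y ^ ⌈b⌉₊) * (1 + y ^ 2) := by gcongr
    _ = C₀ ^ (q - 1) * (‖φ y‖ * y ^ 0 + ‖φ y‖ * y ^ 2 + ‖φ y‖ * y ^ ⌈b⌉₊
          + ‖φ y‖ * y ^ (⌈b⌉₊ + 2)) := by ring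
    _ ≤ _ := by
      gcongr
      exacts [h₀ y hy, h₁ y hy, h₂ y hy, h₃ y hy]

theorem exists_norm_Sop_eq (a : ℝ) {t : ℝ} (ht : t ≠ 0) (φ : ℝ → ℂ) :
    ∃ s : ℝ, ∀ x : ℝ, 0 < x → ‖Sop a t φ x‖ =
      (2 * |t|) ^ (-(a + 1) / 2) * ‖hankelOp a (modulate s φ) ((2 * |t|)⁻¹ * x)‖ := by
  obtain ⟨c, σ, hc, hS⟩ := exists_Skernel_eq a t
  refine ⟨σ / (4 * |t|), fun x hx => ?_⟩
  have key : Sop a t φ x = (c * (((2 * |t|) ^ (-(a + 1) / 2) : ℝ) : ℂ) *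
      Complex.exp (((σ / (4 * |t|) * x ^ 2 : ℝ) : ℂ) * Complex.I)) *
      hankelOp a (modulate (σ / (4 * |t|)) φ) ((2 * |t|)⁻¹ * x) := by
    rw [Sop, hankelOp, ← integral_const_mul]
    refine setIntegral_congr_fun measurableSet_Ioi fun y hy => ?_
    have hexp : Complex.exp (((σ * ((x ^ 2 + y ^ 2) / (4 * |t|)) : ℝ) : ℂ) * Complex.I)
        = Complex.exp (((σ / (4 * |t|) * x ^ 2 : ℝ) : ℂ) * Complex.I)
          * Complex.exp (((σ / (4 * |t|) * y ^ 2 : ℝ) : ℂ) * Complex.I) := by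
      rw [← Complex.exp_add]
      congr 1
      push_cast
      ring
    have harg : x * y / (2 * |t|) = (2 * |t|)⁻¹ * x * y := by ring
    simp only [modulate, indicator_of_mem hy, hS x y hx hy ht, hexp, harg]
    ring
  rw [key, norm_mul, norm_mul, norm_mul, hc, Complex.norm_exp_ofReal_mul_I, one_mul, mul_one,
    Complex.norm_real, Real.norm_of_nonneg (by positivity)]

theorem lintegral_comp_mul_left_mul_rpow (a : ℝ) {s : ℝ} (hs : 0 < s) {F : ℝ → ENNReal}
    (hF : Measurable F) :
    ∫⁻ x in Ioi (0:ℝ), F (s * x) * ENNReal.ofReal (x ^ a)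
      = ENNReal.ofReal (s ^ (-(a + 1))) * ∫⁻ x in Ioi (0:ℝ), F x * ENNReal.ofReal (x ^ a) := by
  have hmeas : Measurable fun x : ℝ => F x * ENNReal.ofReal (x ^ a) := by fun_prop
  have h := lintegral_map (μ := volume) (hmeas.indicator (measurableSet_Ioi (a := (0:ℝ))))
    (measurable_const_mul s)
  rw [Real.map_volume_mul_left hs.ne', lintegral_smul_measure, abs_of_pos (inv_pos.2 hs),
    lintegral_indicator measurableSet_Ioi] at h
  have h' : ∫⁻ x, (Ioi (0:ℝ)).indicator (fun x : ℝ => F x * ENNReal.ofReal (x ^ a)) (s * x)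
      = ENNReal.ofReal (s ^ a) * ∫⁻ x in Ioi (0:ℝ), F (s * x) * ENNReal.ofReal (x ^ a) := by
    rw [← lintegral_const_mul _ (by fun_prop), ← lintegral_indicator measurableSet_Ioi]
    refine lintegral_congr fun x => ?_
    by_cases hx : 0 < x
    · rw [indicator_of_mem (mem_Ioi.2 (mul_pos hs hx)), indicator_of_mem (mem_Ioi.2 hx),
        Real.mul_rpow hs.le hx.le, ENNReal.ofReal_mul (by positivity)]
      ring
    · rw [indicator_of_notMem, indicator_of_notMem (by simpa using hx)]
      simpa using mul_nonpos_of_nonneg_of_nonpos hs.le (not_lt.1 hx)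
  rw [h', smul_eq_mul] at h
  have hsa : ENNReal.ofReal (s ^ (-a)) * ENNReal.ofReal (s ^ a) = 1 := by
    rw [← ENNReal.ofReal_mul (by positivity), ← Real.rpow_add hs]
    simp
  rw [neg_add, Real.rpow_add hs, Real.rpow_neg_one, ENNReal.ofReal_mul (by positivity), mul_assoc,
    h, ← mul_assoc, hsa, one_mul]

/-- Interpolated dispersive estimate for `a ≥ 0` and `r ≥ 2`:
`‖S_a(t)φ‖_{L^r_a} ≤ C(a,r)|t|^{-(a+1)(1/2-1/r)}‖φ‖_{L^{r'}_a}`. -/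
theorem dispersive_Lr_estimate (a r : ℝ) (ha : 0 ≤ a) (hr : 2 ≤ r) :
    ∃ C > (0:ℝ), ∀ t : ℝ, t ≠ 0 → ∀ φ : ℝ → ℂ, SPlus φ →
      LrA a r (Sop a t φ) ≤
        C * |t| ^ (-(a + 1) * (1 / 2 - 1 / r)) * LrA a (r / (r - 1)) φ := by
  obtain ⟨C, hC, hop⟩ := exists_hankelOp_rpow_le ha hr
  refine ⟨C ^ (1 / r) * 2 ^ (-(a + 1) * (1 / 2 - 1 / r)), by positivity, fun t ht φ hφ => ?_⟩
  obtain ⟨s, hs⟩ := exists_norm_Sop_eq a ht φ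
  have hψ := hφ.rapidlyIntegrable_modulate s
  have hT : 0 < 2 * |t| := by positivity
  have hr₀ : 0 < r := by linarith
  have hr₁ : 0 < r - 1 := by linarith
  set A : ℝ := ∫ y in Ioi (0:ℝ), ‖φ y‖ ^ (r / (r - 1)) * y ^ a
  have hA₀ : 0 ≤ A := setIntegral_nonneg measurableSet_Ioi fun y hy => by
    have : (0:ℝ) < y := hy
    positivity
  have hAψ : ∫ y in Ioi (0:ℝ), ‖modulate s φ y‖ ^ (r / (r - 1)) * y ^ a = A :=
    setIntegral_congr_fun measurableSet_Ioi fun y hy => by simp only [norm_modulate s φ hy]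
  have hlint : ∫⁻ x in Ioi (0:ℝ), ENNReal.ofReal (‖Sop a t φ x‖ ^ r * x ^ a)
      ≤ ENNReal.ofReal ((2 * |t|) ^ (-(a + 1) * (1 / 2 - 1 / r) * r) * (C * A ^ (r - 1))) := by
    have hF : Measurable fun x => ENNReal.ofReal (‖hankelOp a (modulate s φ) x‖ ^ r) :=
      ((measurable_hankelOp ha hψ.1).norm.pow_const r).ennreal_ofReal
    have hrw : ∫⁻ x in Ioi (0:ℝ), ENNReal.ofReal (‖Sop a t φ x‖ ^ r * x ^ a)
        = ENNReal.ofReal (((2 * |t|) ^ (-(a + 1) / 2)) ^ r) * ∫⁻ x in Ioi (0:ℝ),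
          ENNReal.ofReal (‖hankelOp a (modulate s φ) ((2 * |t|)⁻¹ * x)‖ ^ r)
            * ENNReal.ofReal (x ^ a) := by
      rw [← lintegral_const_mul' _ _ ENNReal.ofReal_ne_top]
      refine setLIntegral_congr_fun measurableSet_Ioi fun x hx => ?_
      have hx' : (0:ℝ) < x := hx
      simp only [hs x hx]
      rw [Real.mul_rpow (by positivity) (by positivity), mul_assoc,
        ENNReal.ofReal_mul (by positivity), ENNReal.ofReal_mul (by positivity)]
    rw [hrw, lintegral_comp_mul_left_mul_rpow a (inv_pos.2 hT) hF, ← mul_assoc,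
      ← ENNReal.ofReal_mul (by positivity),
      ENNReal.ofReal_mul (p := (2 * |t|) ^ _) (q := C * _) (by positivity)]
    refine mul_le_mul' (le_of_eq ?_) ((hop _ hψ).trans_eq (by rw [hAψ]))
    rw [← Real.rpow_mul hT.le, Real.inv_rpow hT.le, ← Real.rpow_neg hT.le, ← Real.rpow_add hT]
    congr 2
    field_simp
    ring
  have hle : ∫ x in Ioi (0:ℝ), ‖Sop a t φ x‖ ^ r * x ^ a
      ≤ (2 * |t|) ^ (-(a + 1) * (1 / 2 - 1 / r) * r) * (C * A ^ (r - 1)) := by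
    by_cases hI : IntegrableOn (fun x => ‖Sop a t φ x‖ ^ r * x ^ a) (Ioi 0)
    · rw [← ENNReal.ofReal_le_ofReal_iff (by positivity), ofReal_integral_eq_lintegral_ofReal hI]
      · exact hlint
      · filter_upwards [ae_restrict_mem measurableSet_Ioi] with x hx
        have : (0:ℝ) < x := hx
        positivity
    · rw [integral_undef hI]
      positivity
  have hS₀ : 0 ≤ ∫ x in Ioi (0:ℝ), ‖Sop a t φ x‖ ^ r * x ^ a :=
    setIntegral_nonneg measurableSet_Ioi fun x hx => by
      have : (0:ℝ) < x := hx
      positivity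
  calc LrA a r (Sop a t φ)
      ≤ ((2 * |t|) ^ (-(a + 1) * (1 / 2 - 1 / r) * r) * (C * A ^ (r - 1))) ^ (1 / r) :=
        Real.rpow_le_rpow hS₀ hle (by positivity)
    _ = (2 * |t|) ^ (-(a + 1) * (1 / 2 - 1 / r)) * (C ^ (1 / r) * A ^ (1 / (r / (r - 1)))) := by
        rw [Real.mul_rpow (by positivity) (by positivity), Real.mul_rpow hC.le (by positivity),
          ← Real.rpow_mul hT.le, ← Real.rpow_mul hA₀, mul_assoc _ r, mul_one_div_cancel hr₀.ne',
          mul_one, one_div_div, mul_one_div]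
    _ = _ := by
        rw [Real.mul_rpow zero_le_two (abs_nonneg t), LrA]
        ring
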